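/- arXiv:2410.18259 — 2 statements merged into one kernel-verified Lean document; each statement's English description precedes it below -/
import Mathlib

section
/- Let k be a positive integer. For every integer n ≥ 2 and every function f from the primes to the real numbers, Σ_{d | n, d > 1, ω(d) ≥ k} μ(d) f(p_k(d)) = (−1)^k · C(ω(n)−1, k−1) · f(P(n)), where C(·,·) is the binomial coefficient (equal to 0 when ω(n)−1 < k−1) and the sum runs over divisors d > 1 of n having at least k distinct prime factors. -/
open Finset ArithmeticFunction

/-- The largest prime factor of `n` (junk value `0` for `n ≤ 1`). -/
def maxPrimeFac (n : ℕ) : ℕ := n.primeFactors.sup _root_.id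

/-- The `k`-th smallest distinct prime factor of `n` (for `k ≥ 1`), defined when
`ω(n) ≥ k`; junk value `1` otherwise. -/
def kthSmallestPrimeFac (k n : ℕ) : ℕ :=
  (n.primeFactors.sort (· ≤ ·)).getD (k - 1) 1

/-!
Since `μ` vanishes off the squarefree numbers, the sum runs over the sets `t` of prime factors of
`n`, with sign `(-1) ^ #t`. Let `P` be the largest prime factor of `n`. If `P ∉ t` and `k ≤ #t`,
then adding `P` to `t` flips the sign and preserves the `k`-th smallest element, so the two terms
cancel. The surviving sets are `insert P t` with `P ∉ t` and `#t = k - 1`, whose `k`-th smallest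
element is `P`; there are `(ω(n) - 1).choose (k - 1)` of them, all of sign `(-1) ^ k`.
-/

section NthSmallest

variable {α : Type*} [LinearOrder α] {s t : Finset α} {m : α}

/-- The element of `t` preceded by exactly `j` smaller ones (so indexing starts at `0`); the value
is `a` if `#t ≤ j`. It extends `p_{j+1}` from prime factors to arbitrary finite sets. -/
def nthSmallest (t : Finset α) (j : ℕ) (a : α) : α := t.sort.getD j a

lemma sort_insert_of_forall_lt (h : ∀ x ∈ t, x < m) : (insert m t).sort = t.sort ++ [m] := by
  have hm : m ∉ t := fun hmt ↦ (h m hmt).false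
  have hnodup : (t.sort ++ [m]).Nodup := by simp [List.nodup_append, hm]
  have hsorted : (t.sort ++ [m]).Pairwise (· ≤ ·) := by
    simpa [List.pairwise_append] using fun x hx ↦ (h x hx).le
  have htoFinset : (t.sort ++ [m]).toFinset = insert m t := by
    ext x
    simp
  rw [← htoFinset, (List.toFinset_sort _ hnodup).2 hsorted]

lemma nthSmallest_insert_of_lt_card (h : ∀ x ∈ t, x < m) {j : ℕ} (hj : j < #t) (a : α) :
    nthSmallest (insert m t) j a = nthSmallest t j a := by
  rw [nthSmallest, sort_insert_of_forall_lt h, List.getD_append _ _ _ _ (by simpa), nthSmallest]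

lemma nthSmallest_insert_card (h : ∀ x ∈ t, x < m) (a : α) :
    nthSmallest (insert m t) #t a = m := by
  simp [nthSmallest, sort_insert_of_forall_lt h]

variable {M : Type*} [AddCommGroup M]

/-- The contribution of a set `t` to the alternating sum of values of `f` at `nthSmallest t j`; it
is `0` when `t` has no such element, so that the sum may run over all subsets of a given set. -/
def signedNthValue (f : α → M) (j : ℕ) (a : α) (t : Finset α) : M :=
  (-1 : ℤ) ^ #t • if j < #t then f (nthSmallest t j a) else 0

lemma signedNthValue_add_signedNthValue_insert (h : ∀ x ∈ t, x < m) (f : α → M) (j : ℕ) (a : α) :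
    signedNthValue f j a t + signedNthValue f j a (insert m t) =
      if #t = j then (-1 : ℤ) ^ (j + 1) • f m else 0 := by
  have hcard : #(insert m t) = #t + 1 := card_insert_of_notMem fun hmt ↦ (h m hmt).false
  rw [signedNthValue, signedNthValue, hcard]
  rcases lt_trichotomy j #t with hlt | rfl | hgt
  · rw [if_pos hlt, if_pos (by lia), if_neg hlt.ne', nthSmallest_insert_of_lt_card h hlt, pow_succ]
    simp
  · simp [nthSmallest_insert_card h]
  · simp [hgt.ne, hgt.not_gt, show ¬ j < #t + 1 by lia]

theorem sum_powerset_signedNthValue (hm : IsGreatest (s : Set α) m) (f : α → M) (j : ℕ) (a : α) :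
    ∑ t ∈ s.powerset, signedNthValue f j a t = ((-1 : ℤ) ^ (j + 1) * (#s - 1).choose j) • f m := by
  have hlt {t} (ht : t ∈ (s.erase m).powerset) : ∀ x ∈ t, x < m := fun x hx ↦
    have ⟨hne, hxs⟩ := mem_erase.1 (mem_powerset.1 ht hx)
    (hm.2 hxs).lt_of_ne hne
  calc ∑ t ∈ s.powerset, signedNthValue f j a t
      = ∑ t ∈ (s.erase m).powerset,
          (signedNthValue f j a t + signedNthValue f j a (insert m t)) := by
        rw [← insert_erase hm.1, sum_powerset_insert (notMem_erase m s), sum_add_distrib,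
          insert_erase hm.1]
    _ = ∑ t ∈ (s.erase m).powerset, if #t = j then (-1 : ℤ) ^ (j + 1) • f m else 0 :=
        sum_congr rfl fun t ht ↦ signedNthValue_add_signedNthValue_insert (hlt ht) f j a
    _ = ((-1 : ℤ) ^ (j + 1) * (#s - 1).choose j) • f m := by
        rw [← sum_filter, ← powersetCard_eq_filter, sum_const, card_powersetCard,
          card_erase_of_mem hm.1, mul_comm, mul_smul, natCast_zsmul]

end NthSmallest

lemma moebius_prod_of_prime {s : Finset ℕ} (hs : ∀ p ∈ s, p.Prime) :
    moebius (∏ p ∈ s, p) = (-1) ^ #s := by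
  rw [isMultiplicative_moebius.map_prod_of_prime s hs,
    prod_congr rfl fun p hp ↦ moebius_apply_prime (hs p hp), prod_const]

theorem sum_divisors_moebius_smul_primeFactors {M : Type*} [AddCommGroup M] {n : ℕ} (hn : n ≠ 0)
    (g : Finset ℕ → M) :
    ∑ d ∈ n.divisors, moebius d • g d.primeFactors =
      ∑ t ∈ n.primeFactors.powerset, (-1 : ℤ) ^ #t • g t := by
  have hsupp (d : ℕ) (hd : moebius d • g d.primeFactors ≠ 0) : Squarefree d :=
    moebius_ne_zero_iff_squarefree.1 (left_ne_zero_of_smul hd)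
  rw [← sum_filter_of_ne fun d _ ↦ hsupp d, Nat.sum_divisors_filter_squarefree hn,
    Nat.factors_eq]
  refine sum_congr rfl fun t ht ↦ ?_
  have hprime : ∀ p ∈ t, p.Prime := fun p hp ↦ Nat.prime_of_mem_primeFactors (mem_powerset.1 ht hp)
  rw [prod_val, Function.id_def, moebius_prod_of_prime hprime, Nat.primeFactors_prod hprime]

lemma kthSmallestPrimeFac_eq_nthSmallest (k n : ℕ) :
    kthSmallestPrimeFac k n = nthSmallest n.primeFactors (k - 1) 1 :=
  rfl

lemma isGreatest_maxPrimeFac {n : ℕ} (hn : 1 < n) :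
    IsGreatest (n.primeFactors : Set ℕ) (maxPrimeFac n) := by
  have hne : n.primeFactors.Nonempty := Nat.nonempty_primeFactors.2 hn
  rw [maxPrimeFac, ← sup'_eq_sup hne]
  exact isGreatest_max' _ hne

theorem duality_kth_smallest_general {M : Type*} [AddCommGroup M] {k : ℕ} (hk : 1 ≤ k) {n : ℕ}
    (hn : 2 ≤ n) (f : ℕ → M) :
    ∑ d ∈ n.divisors with 1 < d ∧ k ≤ #d.primeFactors,
        moebius d • f (kthSmallestPrimeFac k d) =
      ((-1 : ℤ) ^ k * (#n.primeFactors - 1).choose (k - 1)) • f (maxPrimeFac n) := by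
  obtain ⟨j, rfl⟩ := Nat.exists_eq_add_of_le' hk
  have one_lt_of_lt_card {d : ℕ} (hd : j < #d.primeFactors) : 1 < d :=
    Nat.nonempty_primeFactors.1 (card_pos.1 (by lia))
  calc ∑ d ∈ n.divisors with 1 < d ∧ j + 1 ≤ #d.primeFactors,
        moebius d • f (kthSmallestPrimeFac (j + 1) d)
      = ∑ d ∈ n.divisors, moebius d •
          if j < #d.primeFactors then f (nthSmallest d.primeFactors j 1) else 0 := by
        simp only [Nat.succ_le_iff, and_iff_right_of_imp one_lt_of_lt_card, sum_filter, smul_ite,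
          smul_zero, kthSmallestPrimeFac_eq_nthSmallest, Nat.add_sub_cancel]
    _ = ∑ t ∈ n.primeFactors.powerset, signedNthValue f j 1 t :=
        sum_divisors_moebius_smul_primeFactors (by lia)
          fun t ↦ if j < #t then f (nthSmallest t j 1) else 0
    _ = _ := sum_powerset_signedNthValue (isGreatest_maxPrimeFac hn) f j 1

/-- Duality identity: for `k ≥ 1`, `n ≥ 2` and any real-valued function `f` on the primes,
`Σ_{d ∣ n, d > 1, ω(d) ≥ k} μ(d) f(p_k(d)) = (−1)^k C(ω(n)−1, k−1) f(P(n))`. -/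
theorem duality_kth_smallest (k : ℕ) (hk : 1 ≤ k) (n : ℕ) (hn : 2 ≤ n) (f : ℕ → ℝ) :
    ∑ d ∈ n.divisors.filter (fun d => 1 < d ∧ k ≤ d.primeFactors.card),
        (moebius d : ℝ) * f (kthSmallestPrimeFac k d)
      = (-1) ^ k * ((n.primeFactors.card - 1).choose (k - 1) : ℝ) * f (maxPrimeFac n) := by
  simpa using duality_kth_smallest_general hk hn f
end

section
/- There exist positive constants c and C such that for every prime p and every real x ≥ 2, |Σ_{n ≤ x, p ∤ n} μ(n)| ≤ C · x · exp(−c·√(log x)), where the sum runs over positive integers n ≤ x not divisible by p. -/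
/-!
The function `ζ₁(s) = (s - 1) ζ(s)` is entire. Landau's lower bound for `Re ζ₁'/ζ₁` in terms of a
single zero, combined with `3 + 4 cos θ + cos 2θ ≥ 0`, keeps its zeros to the left of
`Re s = 1 - c / log (|Im s| + 3)`; just inside this region there are zero-free discs on which the
Borel–Carathéodory theorem bounds `1 / ζ₁` by a power of `|Im s|`. The Perron integral of the
Riesz mean `∑_{n ≤ x} (1 - n / x) μ(n)` converges absolutely, so moving it to the edge of the region
is elementary and saves a factor `exp (-2 c √(log x))`; a difference quotient with step
`x exp (-c √(log x))` then removes the smoothing.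

For a prime `p`, `μ(p m)` is `-μ(m)` or `0` according to whether `p ∤ m` or `p ∣ m`, hence the
coprime sum satisfies `M_p(x) = M(x) + M_p(x / p)`. Since `√(log x) ≤ √(log (x / p)) + √(log p)`,
replacing `x` by `x / p` costs at most a factor `exp (c √(log p))` in the exponential and gains a
factor `1 / p`. For `c ≤ 1 / 2` their product is at most `4 / 5` whatever `p` is, so iterating gives
a geometric series and a constant uniform in `p`.
-/

open Finset ArithmeticFunction Real

section BorelCaratheodory

open Complex Metric

variable {F : ℂ → ℂ} {c z : ℂ} {R M : ℝ}

lemma exists_eq_mul_exp_of_ne_zero_on_ball (hF : DifferentiableOn ℂ F (ball c R))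
    (hF0 : ∀ z ∈ ball c R, F z ≠ 0) :
    ∃ L : ℂ → ℂ, DifferentiableOn ℂ L (ball c R) ∧ L c = 0 ∧
      ∀ z ∈ ball c R, F z = F c * Complex.exp (L z) := by
  obtain ⟨P, hP⟩ := ((hF.deriv isOpen_ball).div hF hF0).isExactOn_ball
  have hPd : DifferentiableOn ℂ P (ball c R) := fun w hw =>
    (hP w hw).differentiableAt.differentiableWithinAt
  obtain ⟨a, -, hFP⟩ := (logDeriv_eqOn_iff hF hPd.cexp isOpen_ball
    (convex_ball c R).isPreconnected (fun w _ => Complex.exp_ne_zero _) hF0).mp fun w hw => by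
      simp [logDeriv_apply, (hP w hw).cexp.deriv]
  have hFa : ∀ w ∈ ball c R, F w = a * Complex.exp (P w) := fun w hw => by simpa using hFP hw
  refine ⟨fun w => P w - P c, hPd.sub_const _, sub_self _, fun w hw => ?_⟩
  rw [hFa w hw, hFa c (mem_ball_self (pos_of_mem_ball hw)), mul_assoc, ← Complex.exp_add,
    add_sub_cancel]

lemma exists_eq_mul_exp_of_norm_le_on_ball (hM : 0 < M) (hF : DifferentiableOn ℂ F (ball c R))
    (hF0 : ∀ z ∈ ball c R, F z ≠ 0)
    (hFM : ∀ z ∈ ball c R, ‖F z‖ ≤ Real.exp M * ‖F c‖) :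
    ∃ L : ℂ → ℂ, DifferentiableOn ℂ L (ball c R) ∧ L c = 0 ∧
      (∀ z ∈ ball c R, F z = F c * Complex.exp (L z)) ∧
      ∀ z ∈ ball c R, ‖L z‖ ≤ 2 * M * ‖z - c‖ / (R - ‖z - c‖) := by
  obtain ⟨L, hL, hLc, hFL⟩ := exists_eq_mul_exp_of_ne_zero_on_ball hF hF0
  refine ⟨L, hL, hLc, hFL, fun z hz => ?_⟩
  have hR : 0 < R := pos_of_mem_ball hz
  have hball : ∀ w ∈ ball (0 : ℂ) R, w + c ∈ ball c R := fun w hw => by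
    simpa [mem_ball_iff_norm] using hw
  have hre : ∀ w ∈ ball c R, (L w).re ≤ M := fun w hw => by
    have hFc : 0 < ‖F c‖ := norm_pos_iff.mpr (hF0 c (mem_ball_self hR))
    have h := hFM w hw
    rw [hFL w hw, norm_mul, mul_comm, Complex.norm_exp] at h
    exact Real.exp_le_exp.mp (le_of_mul_le_mul_right h hFc)
  simpa using borelCaratheodory_zero (f := fun w => L (w + c)) (z := z - c) hM
    (hL.comp (by fun_prop) hball) (fun w hw => hre _ (hball w hw)) hR
    (by rwa [mem_ball_zero_iff, ← mem_ball_iff_norm]) (by simpa using hLc)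

lemma norm_ge_mul_exp_of_ne_zero_on_ball (hM : 0 < M) (hF : DifferentiableOn ℂ F (ball c R))
    (hF0 : ∀ z ∈ ball c R, F z ≠ 0) (hFM : ∀ z ∈ ball c R, ‖F z‖ ≤ Real.exp M * ‖F c‖)
    (hz : z ∈ ball c R) :
    ‖F c‖ * Real.exp (-(2 * M * ‖z - c‖ / (R - ‖z - c‖))) ≤ ‖F z‖ := by
  obtain ⟨L, -, -, hFL, hLM⟩ := exists_eq_mul_exp_of_norm_le_on_ball hM hF hF0 hFM
  rw [hFL z hz, norm_mul, Complex.norm_exp]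
  gcongr
  exact (abs_le.mp ((abs_re_le_norm (L z)).trans (hLM z hz))).1

lemma norm_logDeriv_le_of_ne_zero_on_ball (hR : 0 < R) (hM : 0 < M)
    (hF : DifferentiableOn ℂ F (ball c R)) (hF0 : ∀ z ∈ ball c R, F z ≠ 0)
    (hFM : ∀ z ∈ ball c R, ‖F z‖ ≤ Real.exp M * ‖F c‖) :
    ‖logDeriv F c‖ ≤ 4 * M / R := by
  obtain ⟨L, hL, hLc, hFL, hLM⟩ := exists_eq_mul_exp_of_norm_le_on_ball hM hF hF0 hFM
  have hc : ball c R ∈ nhds c := ball_mem_nhds c hR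
  have hder : logDeriv F c = deriv L c := by
    have hev : F =ᶠ[nhds c] fun z => F c * Complex.exp (L z) := by
      filter_upwards [hc] with z hz using hFL z hz
    rw [(logDeriv_congr_nhds hev).eq_of_nhds, logDeriv_const_mul _ _ (hF0 c (mem_ball_self hR)),
      logDeriv_apply, (hL.differentiableAt hc).hasDerivAt.cexp.deriv]
    simp [hLc]
  have hsphere : ∀ z ∈ sphere c (R / 2), ‖L z‖ ≤ 2 * M := fun z hz => by
    have hz' : ‖z - c‖ = R / 2 := mem_sphere_iff_norm.mp hz
    refine (hLM z (sphere_subset_ball (half_lt_self hR) hz)).trans_eq ?_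
    rw [hz', sub_half]
    field_simp
  have hcl : DiffContOnCl ℂ L (ball c (R / 2)) := hL.diffContOnCl_ball
    (closedBall_subset_ball (half_lt_self hR))
  calc ‖logDeriv F c‖ ≤ 2 * M / (R / 2) := by
        rw [hder]
        exact norm_deriv_le_of_forall_mem_sphere_norm_le (half_pos hR) hcl hsphere
    _ = 4 * M / R := by field_simp; ring

end BorelCaratheodory

section Landau

open Complex Metric

/-- The Blaschke-type factor replacing `z - ρ`: on the circle `|z - c| = R` both have the same
modulus, but this one has no zero in the disc. -/
noncomputable def reflectedFactor (c : ℂ) (R : ℝ) (ρ z : ℂ) : ℂ :=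
  (R ^ 2 - (starRingEnd ℂ) (ρ - c) * (z - c)) / R

variable {f g : ℂ → ℂ} {c ρ z : ℂ} {R M : ℝ}

lemma differentiable_reflectedFactor : Differentiable ℂ (reflectedFactor c R ρ) := by
  unfold reflectedFactor
  simp only [div_eq_mul_inv]
  fun_prop

lemma reflectedFactor_center (hR : 0 < R) : reflectedFactor c R ρ c = R := by
  have : (R : ℂ) ≠ 0 := by exact_mod_cast hR.ne'
  simp only [reflectedFactor, sub_self, mul_zero, sub_zero]
  field_simp

lemma norm_reflectedFactor_of_mem_sphere (hR : 0 < R) (hz : z ∈ sphere c R) :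
    ‖reflectedFactor c R ρ z‖ = ‖z - ρ‖ := by
  have hzn : ‖z - c‖ = R := mem_sphere_iff_norm.mp hz
  have hfactor : (R : ℂ) ^ 2 - (starRingEnd ℂ) (ρ - c) * (z - c) =
      (z - c) * (starRingEnd ℂ) (z - ρ) := by
    rw [← hzn, ← conj_mul', ← sub_mul, ← map_sub, sub_sub_sub_cancel_right, mul_comm]
  rw [reflectedFactor, hfactor, norm_div, norm_mul, RCLike.norm_conj, hzn, norm_real,
    Real.norm_of_nonneg hR.le, mul_div_cancel_left₀ _ hR.ne']

lemma reflectedFactor_ne_zero (hρ : ρ ∈ closedBall c R) (hz : z ∈ ball c R) :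
    reflectedFactor c R ρ z ≠ 0 := by
  have hR : 0 < R := pos_of_mem_ball hz
  have hRc : (R : ℂ) ≠ 0 := by exact_mod_cast hR.ne'
  refine div_ne_zero (sub_ne_zero.mpr fun h => ?_) hRc
  have hlt : ‖(starRingEnd ℂ) (ρ - c) * (z - c)‖ < R * R := by
    rw [norm_mul, RCLike.norm_conj]
    exact mul_lt_mul' (mem_closedBall_iff_norm.mp hρ) (mem_ball_iff_norm.mp hz) (norm_nonneg _) hR
  rw [← h, norm_pow, norm_real, Real.norm_of_nonneg hR.le, sq] at hlt
  exact hlt.false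

lemma logDeriv_reflectedFactor_center (hR : 0 < R) :
    logDeriv (reflectedFactor c R ρ) c = -((starRingEnd ℂ) (ρ - c) / R ^ 2) := by
  have hder : HasDerivAt (reflectedFactor c R ρ) (-(starRingEnd ℂ) (ρ - c) / R) c := by
    unfold reflectedFactor
    simpa using ((((hasDerivAt_id c).sub_const c).const_mul
      ((starRingEnd ℂ) (ρ - c))).const_sub ((R : ℂ) ^ 2)).div_const (R : ℂ)
  rw [logDeriv_apply, hder.deriv, reflectedFactor_center hR, div_div, neg_div, sq]

/-- The real part of `1 / (c - ρ) + conj (ρ - c) / R ^ 2`, the contribution of a zero `ρ` to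
`f' / f` at `c` in Landau's inequality. -/
noncomputable def landauTerm (c : ℂ) (R : ℝ) (ρ : ℂ) : ℝ :=
  (1 / (c - ρ) + (starRingEnd ℂ) (ρ - c) / R ^ 2).re

lemma landauTerm_eq : landauTerm c R ρ = (c.re - ρ.re) * (1 / ‖c - ρ‖ ^ 2 - 1 / R ^ 2) := by
  have hsecond : ((starRingEnd ℂ) (ρ - c) / (R : ℂ) ^ 2).re = (ρ.re - c.re) / R ^ 2 := by
    rw [← ofReal_pow, div_ofReal_re, conj_re, sub_re]
  rw [landauTerm, add_re, hsecond, one_div, inv_re, normSq_eq_norm_sq, sub_re]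
  ring

lemma landauTerm_nonneg (hρ : ρ ∈ closedBall c R) (hρc : ρ ≠ c) (hre : ρ.re ≤ c.re) :
    0 ≤ landauTerm c R ρ := by
  have hpos : 0 < ‖c - ρ‖ := norm_pos_iff.mpr (sub_ne_zero.mpr hρc.symm)
  rw [landauTerm_eq]
  refine mul_nonneg (sub_nonneg.mpr hre) (sub_nonneg.mpr ?_)
  gcongr
  exact mem_closedBall_iff_norm'.mp hρ

lemma differentiable_multiset_prod_sub (s : Multiset ℂ) :
    Differentiable ℂ fun z => (s.map (z - ·)).prod := by
  induction s using Multiset.induction with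
  | empty => simp
  | cons ρ s ih =>
    simp only [Multiset.map_cons, Multiset.prod_cons]
    fun_prop

lemma exists_multiset_prod_sub_mul (hR : 0 < R) (hf : AnalyticOnNhd ℂ f (closedBall c R))
    (hfc : f c ≠ 0) :
    ∃ (s : Multiset ℂ) (g : ℂ → ℂ), (∀ ρ ∈ s, ρ ∈ closedBall c R) ∧
      AnalyticOnNhd ℂ g (closedBall c R) ∧ (∀ z ∈ closedBall c R, g z ≠ 0) ∧
      ∀ z ∈ closedBall c R, f z = (s.map (z - ·)).prod * g z := by
  have hc : c ∈ closedBall c R := mem_closedBall_self hR.le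
  have hconn : IsConnected (closedBall c R) := (convex_closedBall c R).isConnected ⟨c, hc⟩
  set D := MeromorphicOn.divisor f (closedBall c R)
  have hfin : D.support.Finite := D.finiteSupport (isCompact_closedBall c R)
  have hord : ∀ u : closedBall c R, meromorphicOrderAt f u ≠ ⊤ :=
    (hf.meromorphicOn.exists_meromorphicOrderAt_ne_top_iff_forall hconn).mp
      ⟨⟨c, hc⟩, by
        simp [(hf c hc).meromorphicOrderAt_eq, (hf c hc).analyticOrderAt_eq_zero.mpr hfc]⟩
  obtain ⟨g, hg, hg0, hfg⟩ := hf.meromorphicOn.extract_zeros_poles hord hfin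
  let s : Multiset ℂ := hfin.toFinset.val.bind fun ρ => Multiset.replicate (D ρ).toNat ρ
  have hprod : (∏ᶠ u, (fun z : ℂ => z - u) ^ D u) = fun z => (s.map (z - ·)).prod := by
    rw [finprod_eq_prod_of_mulSupport_subset_of_finite _ (fun u hu => ?_) hfin]
    · funext z
      simp only [s, Multiset.map_bind, Multiset.prod_bind, Multiset.map_replicate,
        Multiset.prod_replicate, Finset.prod_apply, Pi.pow_apply]
      refine Finset.prod_congr rfl fun ρ _ => ?_
      rw [← zpow_natCast, Int.toNat_of_nonneg (MeromorphicOn.AnalyticOnNhd.divisor_nonneg hf ρ)]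
    · contrapose! hu
      simp [Function.notMem_support.mp hu]
  have hsg : AnalyticOnNhd ℂ (fun z => (s.map (z - ·)).prod * g z) (closedBall c R) := by
    exact fun z hz => (differentiable_multiset_prod_sub s).analyticAt z |>.mul (hg z hz)
  refine ⟨s, g, fun ρ hρ => ?_, hg, fun z hz => hg0 ⟨z, hz⟩, ?_⟩
  · obtain ⟨u, hu, hρu⟩ := Multiset.mem_bind.mp hρ
    rw [Multiset.eq_of_mem_replicate hρu]
    exact D.supportWithinDomain (hfin.mem_toFinset.mp hu)
  · refine hf.eqOn_of_preconnected_of_frequently_eq hsg hconn.isPreconnected hc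
      (Filter.Eventually.frequently ?_)
    have hacc : AccPt c (Filter.principal (closedBall c R)) := by
      simpa using (PerfectSpace.univ_preperfect c (Set.mem_univ c)).nhds_inter
        (closedBall_mem_nhds c hR)
    rw [hprod] at hfg
    exact (hf c hc).meromorphicAt.eventuallyEq_nhdsNE_of_eventuallyEq_codiscreteWithin
      (hsg c hc).meromorphicAt hc hacc hfg

lemma re_logDeriv_sub_mul (hρ : ρ ∈ closedBall c R) (hρc : ρ ≠ c) (hg : DifferentiableAt ℂ g c)
    (hgc : g c ≠ 0) :
    (logDeriv (fun z => (z - ρ) * g z) c).re =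
      landauTerm c R ρ + (logDeriv (fun z => reflectedFactor c R ρ z * g z) c).re := by
  have hR : 0 < R :=
    (norm_pos_iff.mpr (sub_ne_zero.mpr hρc)).trans_le (mem_closedBall_iff_norm.mp hρ)
  have hlog : logDeriv (fun z => z - ρ) c = 1 / (c - ρ) := by simp [logDeriv_apply]
  rw [logDeriv_mul c (reflectedFactor_ne_zero hρ (mem_ball_self hR)) hgc
      differentiable_reflectedFactor.differentiableAt hg,
    logDeriv_mul (f := fun z => z - ρ) c (sub_ne_zero.mpr hρc.symm) hgc (by fun_prop) hg,
    logDeriv_reflectedFactor_center hR, hlog]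
  simp only [landauTerm, add_re, neg_re]
  ring

lemma sum_landauTerm_le_re_logDeriv (hR : 0 < R) (hM : 0 < M) (s : Multiset ℂ)
    (hs : ∀ ρ ∈ s, ρ ∈ closedBall c R ∧ ρ ≠ c) (hg : DiffContOnCl ℂ g (ball c R))
    (hg0 : ∀ z ∈ ball c R, g z ≠ 0)
    (hM' : ∀ z ∈ sphere c R,
      ‖(s.map (z - ·)).prod * g z‖ ≤ Real.exp M * ‖(s.map (c - ·)).prod * g c‖) :
    (s.map (landauTerm c R)).sum - 4 * M / R ≤
      (logDeriv (fun z => (s.map (z - ·)).prod * g z) c).re := by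
  have hc : c ∈ ball c R := mem_ball_self hR
  induction s using Multiset.induction generalizing g with
  | empty =>
    have hball : ∀ z ∈ ball c R, ‖g z‖ ≤ Real.exp M * ‖g c‖ := fun z hz =>
      norm_le_of_forall_mem_frontier_norm_le isBounded_ball hg
        (by simpa [frontier_ball c hR.ne'] using hM') (subset_closure hz)
    have h := norm_logDeriv_le_of_ne_zero_on_ball hR hM hg.differentiableOn hg0 hball
    simpa using (abs_le.mp ((abs_re_le_norm _).trans h)).1
  | cons ρ s ih =>
    have hρ := hs ρ (Multiset.mem_cons_self ρ s)
    have hs' : ∀ w ∈ s, w ∈ closedBall c R ∧ w ≠ c := fun w hw => hs w (Multiset.mem_cons_of_mem hw)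
    have hdiff : DifferentiableAt ℂ (fun z => (s.map (z - ·)).prod * g z) c :=
      (differentiable_multiset_prod_sub s c).mul (hg.differentiableAt isOpen_ball hc)
    have hne : (s.map (c - ·)).prod * g c ≠ 0 := by
      simpa [Multiset.prod_eq_zero_iff, sub_eq_zero, hg0 c hc] using fun h => (hs' c h).2 rfl
    have hold := re_logDeriv_sub_mul hρ.1 hρ.2 hdiff hne
    have hnew := ih hs' (differentiable_reflectedFactor.diffContOnCl.smul hg)
      (fun z hz => mul_ne_zero (reflectedFactor_ne_zero hρ.1 hz) (hg0 z hz)) fun z hz => ?_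
    · simp only [mul_left_comm (Multiset.prod _), smul_eq_mul] at hnew
      simp only [Multiset.map_cons, Multiset.prod_cons, Multiset.sum_cons, mul_assoc, hold]
      linarith
    · have hρR : ‖c - ρ‖ ≤ R := mem_closedBall_iff_norm'.mp hρ.1
      have h := hM' z hz
      simp only [Multiset.map_cons, Multiset.prod_cons, mul_assoc, norm_mul (_ - ρ)] at h
      simp only [smul_eq_mul, mul_left_comm (Multiset.prod _), norm_mul (reflectedFactor _ _ _ _),
        norm_reflectedFactor_of_mem_sphere hR hz, reflectedFactor_center hR]
      refine h.trans ?_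
      rw [norm_mul (R : ℂ), norm_real, Real.norm_of_nonneg hR.le]
      gcongr

theorem landau_inequality (hR : 0 < R) (hM : 0 < M) (hf : AnalyticOnNhd ℂ f (closedBall c R))
    (hfc : f c ≠ 0) (hfM : ∀ z ∈ sphere c R, ‖f z‖ ≤ Real.exp M * ‖f c‖)
    (hzeros : ∀ z ∈ closedBall c R, f z = 0 → z.re ≤ c.re) :
    -(4 * M / R) ≤ (logDeriv f c).re ∧ ∀ ρ ∈ closedBall c R, f ρ = 0 →
      landauTerm c R ρ - 4 * M / R ≤ (logDeriv f c).re := by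
  obtain ⟨s, g, hs, hg, hg0, hfac⟩ := exists_multiset_prod_sub_mul hR hf hfc
  have hc : c ∈ closedBall c R := mem_closedBall_self hR.le
  have hmem : ∀ ρ ∈ closedBall c R, f ρ = 0 ↔ ρ ∈ s := fun ρ hρ => by
    simp [hfac ρ hρ, hg0 ρ hρ, Multiset.prod_eq_zero_iff, sub_eq_zero]
  have hsc : ∀ ρ ∈ s, ρ ∈ closedBall c R ∧ ρ ≠ c := fun ρ hρ =>
    ⟨hs ρ hρ, fun h => hfc ((hmem c hc).mpr (h ▸ hρ))⟩
  have hfs : f =ᶠ[nhds c] fun z => (s.map (z - ·)).prod * g z := by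
    filter_upwards [closedBall_mem_nhds c hR] with z hz using hfac z hz
  have hsum : (s.map (landauTerm c R)).sum - 4 * M / R ≤ (logDeriv f c).re := by
    rw [(logDeriv_congr_nhds hfs).eq_of_nhds]
    refine sum_landauTerm_le_re_logDeriv hR hM s hsc (hg.differentiableOn.diffContOnCl_ball le_rfl)
      (fun z hz => hg0 z (ball_subset_closedBall hz)) fun z hz => ?_
    rw [← hfac z (sphere_subset_closedBall hz), ← hfac c hc]
    exact hfM z hz
  have hnonneg : ∀ x ∈ s.map (landauTerm c R), 0 ≤ x := by
    simp only [Multiset.mem_map, forall_exists_index, and_imp, forall_apply_eq_imp_iff₂]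
    exact fun ρ hρ => landauTerm_nonneg (hs ρ hρ) (hsc ρ hρ).2
      (hzeros ρ (hs ρ hρ) ((hmem ρ (hs ρ hρ)).mpr hρ))
  refine ⟨by linarith [Multiset.sum_nonneg hnonneg], fun ρ hρ hfρ => ?_⟩
  have hle := Multiset.single_le_sum hnonneg _
    (Multiset.mem_map_of_mem (landauTerm c R) ((hmem ρ hρ).mp hfρ))
  linarith

end Landau

section ZetaContinuation

open Complex MeasureTheory Filter Asymptotics Topology

variable {s : ℂ}

/-- The fractional part on `(1, ∞)`, extended by zero, so that its Mellin transform at `-s` is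
`∫_1^∞ {t} t^(-s-1) dt`, holomorphic for `0 < Re s`. -/
noncomputable def fractIoi : ℝ → ℂ := (Set.Ioi 1).indicator fun t => (Int.fract t : ℝ)

lemma norm_fractIoi_le_one (t : ℝ) : ‖fractIoi t‖ ≤ 1 := by
  refine (norm_indicator_le_norm_self _ _).trans ?_
  rw [norm_real, Real.norm_of_nonneg (Int.fract_nonneg t)]
  exact (Int.fract_lt_one t).le

lemma measurable_fractIoi : Measurable fractIoi :=
  (measurable_ofReal.comp measurable_fract).indicator measurableSet_Ioi

lemma differentiableAt_mellin_fractIoi_neg (hs : 0 < s.re) :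
    DifferentiableAt ℂ (fun s => mellin fractIoi (-s)) s := by
  have hlocal : LocallyIntegrableOn fractIoi (Set.Ioi 0) :=
    ((locallyIntegrable_const (1 : ℝ)).mono measurable_fractIoi.aestronglyMeasurable
      (.of_forall fun t => by simpa using norm_fractIoi_le_one t)).locallyIntegrableOn _
  have htop : fractIoi =O[atTop] fun t : ℝ => t ^ (-(0 : ℝ)) :=
    .of_bound 1 (.of_forall fun t => by simpa using norm_fractIoi_le_one t)
  have hzero : fractIoi =O[𝓝[>] 0] fun t : ℝ => t ^ (-((-s).re - 1)) := by
    refine .of_bound 1 ?_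
    filter_upwards [mem_nhdsWithin_of_mem_nhds (Iio_mem_nhds zero_lt_one)] with t ht
    rw [fractIoi, Set.indicator_of_notMem (Set.notMem_Ioi.mpr ht.le)]
    simp
  exact (mellin_differentiableAt_of_isBigO_rpow hlocal htop (by simpa using hs) hzero
    (by linarith)).comp s differentiable_neg.differentiableAt

lemma mellin_fractIoi_neg (s : ℂ) :
    mellin fractIoi (-s) = ∫ t in Set.Ioi (1 : ℝ), (Int.fract t : ℝ) * (t : ℂ) ^ (-(s + 1)) := by
  have hind : ∀ t : ℝ, (t : ℂ) ^ (-s - 1) • fractIoi t =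
      (Set.Ioi 1).indicator (fun t : ℝ => (Int.fract t : ℝ) * (t : ℂ) ^ (-(s + 1))) t := fun t => by
    by_cases h : t ∈ Set.Ioi 1 <;>
      simp only [fractIoi, h, Set.indicator_of_mem, Set.indicator_of_notMem, not_false_eq_true,
        smul_eq_mul, zero_mul, mul_comm, neg_add']
  simp_rw [mellin, hind]
  rw [setIntegral_indicator measurableSet_Ioi, Set.Ioi_inter_Ioi, max_eq_right zero_le_one]

lemma norm_fract_mul_cpow_le (s : ℂ) {t : ℝ} (ht : 0 < t) :
    ‖(Int.fract t : ℝ) * (t : ℂ) ^ (-(s + 1))‖ ≤ t ^ (-s.re - 1) := by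
  rw [norm_mul, norm_cpow_eq_rpow_re_of_pos ht, norm_real,
    Real.norm_of_nonneg (Int.fract_nonneg t), neg_re, add_re, one_re, neg_add']
  exact mul_le_of_le_one_left (by positivity) (Int.fract_lt_one t).le

lemma ae_norm_fract_mul_cpow_le (s : ℂ) : ∀ᵐ t ∂volume.restrict (Set.Ioi (1 : ℝ)),
    ‖(Int.fract t : ℝ) * (t : ℂ) ^ (-(s + 1))‖ ≤ t ^ (-s.re - 1) := by
  filter_upwards [ae_restrict_mem measurableSet_Ioi] with t ht
  exact norm_fract_mul_cpow_le s (zero_lt_one.trans ht)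

lemma integrableOn_fract_mul_cpow (hs : 0 < s.re) :
    IntegrableOn (fun t : ℝ => (Int.fract t : ℝ) * (t : ℂ) ^ (-(s + 1))) (Set.Ioi 1) := by
  refine (integrableOn_Ioi_rpow_of_lt (by linarith) zero_lt_one).mono' ?_
    (ae_norm_fract_mul_cpow_le s)
  exact (by fun_prop : Measurable _).aestronglyMeasurable

lemma norm_mellin_fractIoi_neg_le (hs : 0 < s.re) : ‖mellin fractIoi (-s)‖ ≤ 1 / s.re := by
  calc ‖mellin fractIoi (-s)‖ ≤ ∫ t in Set.Ioi (1 : ℝ), t ^ (-s.re - 1) := by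
        rw [mellin_fractIoi_neg]
        exact norm_integral_le_of_norm_le
          (integrableOn_Ioi_rpow_of_lt (by linarith) zero_lt_one) (ae_norm_fract_mul_cpow_le s)
    _ = 1 / s.re := by simp [integral_Ioi_rpow_of_lt (by linarith : -s.re - 1 < -1) zero_lt_one]

lemma integral_floor_mul_cpow (hs : 1 < s.re) :
    ∫ t in Set.Ioi (1 : ℝ), (⌊t⌋₊ : ℂ) * (t : ℂ) ^ (-(s + 1)) =
      1 / (s - 1) - mellin fractIoi (-s) := by
  have hpow : ∫ t in Set.Ioi (1 : ℝ), (t : ℂ) ^ (-s) = 1 / (s - 1) := by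
    rw [integral_Ioi_cpow_of_lt (by simpa using hs) zero_lt_one, ofReal_one, one_cpow, neg_div,
      ← div_neg, neg_add', neg_neg]
  rw [mellin_fractIoi_neg, ← hpow, ← integral_sub
    (integrableOn_Ioi_cpow_of_lt (by simpa using hs) zero_lt_one)
    (integrableOn_fract_mul_cpow (by linarith))]
  refine setIntegral_congr_fun measurableSet_Ioi fun t ht => ?_
  have ht0 : (0 : ℝ) < t := zero_lt_one.trans ht
  have htc : (t : ℂ) ≠ 0 := by exact_mod_cast ht0.ne'
  have hfloor : (⌊t⌋₊ : ℂ) = t - (Int.fract t : ℝ) := by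
    rw [← ofReal_sub, Int.self_sub_fract, ← natCast_floor_eq_intCast_floor ht0.le, ofReal_natCast]
  have hsucc : (t : ℂ) ^ (-s) = t * (t : ℂ) ^ (-(s + 1)) := by
    rw [neg_add, cpow_add _ _ htc, cpow_neg_one, mul_comm, mul_assoc, inv_mul_cancel₀ htc, mul_one]
  simp only [hfloor, hsucc, sub_mul]

lemma riemannZeta₁_eq_mul_riemannZeta (hs : s ≠ 1) :
    riemannZeta₁ s = (s - 1) * riemannZeta s := by
  rw [riemannZeta_eq_inv_sub_mul hs, mul_inv_cancel_left₀ (sub_ne_zero.mpr hs)]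

lemma ne_one_of_one_lt_re (hs : 1 < s.re) : s ≠ 1 := fun h => by simp [h] at hs

lemma riemannZeta₁_eq_sub_mul_mellin_of_one_lt_re (hs : 1 < s.re) :
    riemannZeta₁ s = s - (s - 1) * s * mellin fractIoi (-s) := by
  have hs1 : s - 1 ≠ 0 := sub_ne_zero.mpr (ne_one_of_one_lt_re hs)
  have hzeta : riemannZeta s = s * (1 / (s - 1) - mellin fractIoi (-s)) := by
    rw [← LSeries_one_eq_riemannZeta hs, ← integral_floor_mul_cpow hs,
      LSeries_eq_mul_integral' 1 zero_le_one hs (.of_bound 1 (.of_forall fun n => by simp))]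
    simp
  rw [riemannZeta₁_eq_mul_riemannZeta (ne_one_of_one_lt_re hs), hzeta]
  field_simp

lemma riemannZeta₁_eq_sub_mul_mellin (hs : 0 < s.re) :
    riemannZeta₁ s = s - (s - 1) * s * mellin fractIoi (-s) := by
  have hzeta : AnalyticOnNhd ℂ riemannZeta₁ {s : ℂ | 0 < s.re} := fun z _ =>
    differentiable_riemannZeta₁.analyticAt z
  have hmellin : AnalyticOnNhd ℂ (fun s => s - (s - 1) * s * mellin fractIoi (-s))
      {s : ℂ | 0 < s.re} := by
    refine DifferentiableOn.analyticOnNhd (fun z hz => ?_)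
      (isOpen_lt continuous_const continuous_re)
    have := differentiableAt_mellin_fractIoi_neg hz
    exact DifferentiableAt.differentiableWithinAt (by fun_prop)
  refine hzeta.eqOn_of_preconnected_of_eventuallyEq hmellin
    (convex_halfSpace_re_gt 0).isPreconnected (z₀ := 2) (by simp) ?_ hs
  have hnhds : {s : ℂ | 1 < s.re} ∈ 𝓝 (2 : ℂ) :=
    (isOpen_lt continuous_const continuous_re).mem_nhds (by simp)
  filter_upwards [hnhds] with z hz using riemannZeta₁_eq_sub_mul_mellin_of_one_lt_re hz

lemma norm_riemannZeta₁_le (hs : 1 / 2 ≤ s.re) (hs' : s.re ≤ 3) :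
    ‖riemannZeta₁ s‖ ≤ 4 * (|s.im| + 3) ^ 2 := by
  have hmellin : ‖mellin fractIoi (-s)‖ ≤ 2 := by
    refine (norm_mellin_fractIoi_neg_le (by linarith)).trans ?_
    rw [div_le_iff₀ (by linarith)]
    linarith
  have hnorm : ‖s‖ ≤ |s.im| + 3 := by
    linarith [norm_le_abs_re_add_abs_im s, abs_of_nonneg (by linarith : 0 ≤ s.re)]
  have hnorm' : ‖s - 1‖ ≤ |s.im| + 3 := by
    have hre : |s.re - 1| ≤ 3 := abs_le.mpr ⟨by linarith, by linarith⟩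
    have h := norm_le_abs_re_add_abs_im (s - 1)
    rw [sub_re, sub_im, one_re, one_im, sub_zero] at h
    linarith
  calc ‖riemannZeta₁ s‖ ≤ ‖s‖ + ‖s - 1‖ * ‖s‖ * ‖mellin fractIoi (-s)‖ := by
        rw [riemannZeta₁_eq_sub_mul_mellin (by linarith), ← norm_mul, ← norm_mul]
        exact norm_sub_le _ _
    _ ≤ (|s.im| + 3) + (|s.im| + 3) * (|s.im| + 3) * 2 := by gcongr
    _ ≤ 4 * (|s.im| + 3) ^ 2 := by nlinarith [abs_nonneg s.im]

lemma norm_riemannZeta₁_ofReal_le {σ : ℝ} (hσ : 1 < σ) : ‖riemannZeta₁ σ‖ ≤ 2 * σ - 1 := by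
  have hmellin : ‖mellin fractIoi (-σ)‖ ≤ 1 / σ := by
    simpa using norm_mellin_fractIoi_neg_le (s := σ) (by simpa using zero_lt_one.trans hσ)
  calc ‖riemannZeta₁ σ‖ ≤ ‖(σ : ℂ)‖ + ‖(σ - 1 : ℂ)‖ * ‖(σ : ℂ)‖ * ‖mellin fractIoi (-σ)‖ := by
        rw [riemannZeta₁_eq_sub_mul_mellin (by simpa using zero_lt_one.trans hσ), ← norm_mul,
          ← norm_mul]
        exact norm_sub_le _ _
    _ ≤ σ + (σ - 1) * σ * (1 / σ) := by
        rw [← ofReal_one, ← ofReal_sub, norm_real, norm_real, Real.norm_of_nonneg (by linarith),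
          Real.norm_of_nonneg (by linarith)]
        have : 0 ≤ (σ - 1) * σ := by nlinarith
        gcongr
    _ = 2 * σ - 1 := by field_simp; ring

lemma tsum_one_div_nat_rpow_le {σ : ℝ} (hσ : 1 < σ) :
    ∑' n : ℕ, 1 / (n : ℝ) ^ σ ≤ (2 * σ - 1) / (σ - 1) := by
  have hzeta : ((∑' n : ℕ, 1 / (n : ℝ) ^ σ : ℝ) : ℂ) = riemannZeta σ := by
    rw [zeta_eq_tsum_one_div_nat_cpow (by simpa using hσ), ofReal_tsum]
    exact tsum_congr fun n => by rw [ofReal_div, ofReal_cpow (by positivity)]; simp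
  have hnorm : ‖(σ - 1 : ℂ)‖ = σ - 1 := by
    rw [← ofReal_one, ← ofReal_sub, norm_real, Real.norm_of_nonneg (by linarith)]
  have hnonneg : 0 ≤ ∑' n : ℕ, 1 / (n : ℝ) ^ σ := tsum_nonneg fun n => by positivity
  rw [← Real.norm_of_nonneg hnonneg, ← norm_real, hzeta, le_div_iff₀ (by linarith), mul_comm,
    ← hnorm, ← norm_mul, ← riemannZeta₁_eq_mul_riemannZeta (by exact_mod_cast hσ.ne')]
  exact norm_riemannZeta₁_ofReal_le hσ

lemma LSeries_moebius_eq_inv_riemannZeta (hs : 1 < s.re) :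
    LSeries (fun n => (moebius n : ℂ)) s = (riemannZeta s)⁻¹ := by
  have hmul := LSeries_zeta_mul_Lseries_moebius hs
  rw [LSeries_zeta_eq_riemannZeta hs] at hmul
  exact eq_inv_of_mul_eq_one_right hmul

lemma norm_moebius_le_one (n : ℕ) : ‖(moebius n : ℂ)‖ ≤ 1 := by
  rw [norm_intCast]
  exact_mod_cast abs_moebius_le_one

lemma norm_inv_riemannZeta_le (hs : 1 < s.re) :
    ‖(riemannZeta s)⁻¹‖ ≤ (2 * s.re - 1) / (s.re - 1) := by
  have hterm : ∀ n : ℕ, ‖LSeries.term (fun n => (moebius n : ℂ)) s n‖ ≤ 1 / (n : ℝ) ^ s.re := by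
    intro n
    rw [LSeries.norm_term_eq]
    split_ifs
    · positivity
    · gcongr
      exact norm_moebius_le_one n
  rw [← LSeries_moebius_eq_inv_riemannZeta hs]
  exact (tsum_of_norm_bounded (Real.summable_one_div_nat_rpow.mpr hs).hasSum hterm).trans
    (tsum_one_div_nat_rpow_le hs)

lemma riemannZeta₁_ne_zero_of_one_le_re (hs : 1 ≤ s.re) : riemannZeta₁ s ≠ 0 := by
  rcases eq_or_ne s 1 with rfl | hs1
  · simp [riemannZeta₁_one]
  · rw [riemannZeta₁_eq_mul_riemannZeta hs1]
    exact mul_ne_zero (sub_ne_zero.mpr hs1) (riemannZeta_ne_zero_of_one_le_re hs)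

lemma le_norm_riemannZeta₁ (hs : 1 < s.re) :
    (s.re - 1) ^ 2 / (2 * s.re - 1) ≤ ‖riemannZeta₁ s‖ := by
  have hzeta : 0 < ‖(riemannZeta s)⁻¹‖ :=
    norm_pos_iff.mpr (inv_ne_zero (riemannZeta_ne_zero_of_one_le_re hs.le))
  have hle : (s.re - 1) / (2 * s.re - 1) ≤ ‖riemannZeta s‖ := by
    simpa using inv_anti₀ hzeta (norm_inv_riemannZeta_le hs)
  have hle_norm : s.re - 1 ≤ ‖s - 1‖ := by simpa only [sub_re, one_re] using re_le_norm (s - 1)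
  calc (s.re - 1) ^ 2 / (2 * s.re - 1) = (s.re - 1) * ((s.re - 1) / (2 * s.re - 1)) := by ring
    _ ≤ ‖s - 1‖ * ‖riemannZeta s‖ :=
        mul_le_mul hle_norm hle (div_nonneg (by linarith) (by linarith)) (norm_nonneg _)
    _ = ‖riemannZeta₁ s‖ := by
        rw [riemannZeta₁_eq_mul_riemannZeta (ne_one_of_one_lt_re hs), norm_mul]

lemma norm_riemannZeta₁_le_mul_of_mem_closedBall {z : ℂ} (hs : 1 < s.re) (hs' : s.re ≤ 3 / 2)
    (hz : z ∈ Metric.closedBall s (1 / 2)) :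
    ‖riemannZeta₁ z‖ ≤ 12 * (|s.im| + 3) ^ 2 / (s.re - 1) ^ 2 * ‖riemannZeta₁ s‖ := by
  have hdist : ‖z - s‖ ≤ 1 / 2 := mem_closedBall_iff_norm.mp hz
  have hre := abs_le.mp ((abs_re_le_norm (z - s)).trans hdist)
  have him := (abs_im_le_norm (z - s)).trans hdist
  rw [sub_re] at hre
  rw [sub_im] at him
  have hpos : 0 < (s.re - 1) ^ 2 := pow_pos (by linarith) 2
  have hbelow : (s.re - 1) ^ 2 / 2 ≤ ‖riemannZeta₁ s‖ :=
    (by gcongr <;> linarith : _ ≤ (s.re - 1) ^ 2 / (2 * s.re - 1)).trans (le_norm_riemannZeta₁ hs)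
  have himz : |z.im| ≤ |s.im| + 1 / 2 := by linarith [abs_sub_abs_le_abs_sub z.im s.im]
  calc ‖riemannZeta₁ z‖ ≤ 4 * (|z.im| + 3) ^ 2 :=
        norm_riemannZeta₁_le (by linarith) (by linarith)
    _ ≤ 4 * (|s.im| + 1 / 2 + 3) ^ 2 := by gcongr
    _ ≤ 6 * (|s.im| + 3) ^ 2 := by nlinarith [abs_nonneg s.im]
    _ = 12 * (|s.im| + 3) ^ 2 / (s.re - 1) ^ 2 * ((s.re - 1) ^ 2 / 2) := by
        have hne : s.re - 1 ≠ 0 := by linarith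
        field_simp
        norm_num
    _ ≤ _ := by gcongr

end ZetaContinuation

section ZeroFreeRegion

open Complex

lemma re_three_mul_add_four_mul_add_sq_nonneg {w : ℂ} (hw : ‖w‖ = 1) :
    0 ≤ 3 + 4 * w.re + (w ^ 2).re := by
  have hsq : w.re * w.re + w.im * w.im = 1 := by
    rw [← normSq_apply, normSq_eq_norm_sq, hw, one_pow]
  rw [sq, mul_re]
  nlinarith [sq_nonneg (1 + w.re)]

lemma LSeries_three_four_one {f : ℕ → ℝ} (hf : ∀ n, 0 ≤ f n) {σ : ℝ}
    (hsum : LSeriesSummable (fun n => (f n : ℂ)) σ) (t : ℝ) :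
    0 ≤ 3 * (LSeries (fun n => (f n : ℂ)) σ).re +
      4 * (LSeries (fun n => (f n : ℂ)) (σ + t * I)).re +
      (LSeries (fun n => (f n : ℂ)) (σ + (2 * t : ℝ) * I)).re := by
  have hre (u : ℝ) : HasSum (fun n => (LSeries.term (fun n => (f n : ℂ)) (σ + u * I) n).re)
      (LSeries (fun n => (f n : ℂ)) (σ + u * I)).re :=
    hasSum_re (hsum.of_re_le_re (by simp)).LSeriesHasSum
  have hcomb := (((hasSum_re hsum.LSeriesHasSum).mul_left 3).add ((hre t).mul_left 4)).add
    (hre (2 * t))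
  refine hcomb.nonneg fun n => ?_
  rcases eq_or_ne n 0 with rfl | hn
  · simp
  have hn0 : (0 : ℝ) < n := by positivity
  set w : ℂ := (n : ℂ) ^ (-(t * I)) with hw
  have hw1 : ‖w‖ = 1 := by
    rw [hw, ← ofReal_natCast, norm_cpow_eq_rpow_re_of_pos hn0]
    simp
  have hterm (s : ℂ) : LSeries.term (fun n => (f n : ℂ)) (σ + s) n =
      (f n / (n : ℝ) ^ σ : ℝ) * (n : ℂ) ^ (-s) := by
    rw [LSeries.term_of_ne_zero hn, cpow_add _ _ (by positivity), cpow_neg, ofReal_div,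
      ofReal_cpow hn0.le, ofReal_natCast, div_mul_eq_div_div, div_eq_mul_inv]
  have hterm₀ : (LSeries.term (fun n => (f n : ℂ)) σ n).re = f n / (n : ℝ) ^ σ := by
    simpa using congrArg re (hterm 0)
  have hterm₂ : (n : ℂ) ^ (-((2 * t : ℝ) * I)) = w ^ 2 := by
    rw [hw, ← cpow_nat_mul]
    congr 1
    push_cast
    ring
  rw [hterm₀, hterm, hterm, hterm₂, re_ofReal_mul, re_ofReal_mul]
  have h := mul_nonneg (div_nonneg (hf n) (rpow_nonneg hn0.le σ))
    (re_three_mul_add_four_mul_add_sq_nonneg hw1)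
  linarith

lemma LSeries_vonMangoldt_eq_sub_logDeriv_riemannZeta₁ {s : ℂ} (hs : 1 < s.re) :
    LSeries (fun n => (vonMangoldt n : ℂ)) s = 1 / (s - 1) - logDeriv riemannZeta₁ s := by
  have hs1 := ne_one_of_one_lt_re hs
  have hs1' := sub_ne_zero.mpr hs1
  have hζ := riemannZeta₁_ne_zero_of_one_le_re hs.le
  rw [LSeries_vonMangoldt_eq_deriv_riemannZeta_div hs,
    deriv_riemannZeta_eq_neg_inv_sub_sq_mul_add hs1, riemannZeta_eq_inv_sub_mul hs1, logDeriv_apply]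
  field_simp
  ring

lemma logDeriv_riemannZeta₁_three_four_one {σ : ℝ} (hσ : 1 < σ) (t : ℝ) :
    3 * (logDeriv riemannZeta₁ σ).re + 4 * (logDeriv riemannZeta₁ (σ + t * I)).re +
        (logDeriv riemannZeta₁ (σ + (2 * t : ℝ) * I)).re ≤
      3 / (σ - 1) + 4 * (1 / (σ + t * I - 1)).re + (1 / (σ + (2 * t : ℝ) * I - 1)).re := by
  have h := LSeries_three_four_one (fun n => vonMangoldt_nonneg (n := n))
    (LSeriesSummable_vonMangoldt (s := σ) (by simpa using hσ)) t
  have hpole : (1 / ((σ : ℂ) - 1)).re = 1 / (σ - 1) := by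
    rw [← ofReal_one, ← ofReal_sub, ← ofReal_div, ofReal_re]
  rw [LSeries_vonMangoldt_eq_sub_logDeriv_riemannZeta₁ (by simpa using hσ),
    LSeries_vonMangoldt_eq_sub_logDeriv_riemannZeta₁ (by simpa using hσ),
    LSeries_vonMangoldt_eq_sub_logDeriv_riemannZeta₁ (by simpa using hσ), sub_re, sub_re, sub_re,
    hpole] at h
  linarith [mul_one_div 3 (σ - 1)]

lemma re_one_div_le_half {z : ℂ} (hre : z.re ≤ 1 / 2) (him : 1 ≤ |z.im|) :
    (1 / z).re ≤ 1 / 2 := by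
  have him' : 1 ≤ z.im * z.im := by nlinarith [abs_mul_abs_self z.im]
  rw [one_div, inv_re, normSq_apply, div_le_iff₀ (by nlinarith)]
  nlinarith

section Landau

variable {s : ℂ} {M : ℝ}

lemma landau_riemannZeta₁ (hs : 1 < s.re) (hs' : s.re ≤ 3 / 2)
    (hM : Real.log (12 * (|s.im| + 3) ^ 2 / (s.re - 1) ^ 2) ≤ M) :
    -(8 * M) ≤ (logDeriv riemannZeta₁ s).re ∧
      ∀ ρ ∈ Metric.closedBall s (1 / 2), riemannZeta₁ ρ = 0 →
        landauTerm s (1 / 2) ρ - 8 * M ≤ (logDeriv riemannZeta₁ s).re := by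
  have hpos : 0 < (s.re - 1) ^ 2 := pow_pos (by linarith) 2
  have hone : 1 < 12 * (|s.im| + 3) ^ 2 / (s.re - 1) ^ 2 := by
    rw [lt_div_iff₀ hpos]
    nlinarith [abs_nonneg s.im]
  have hradius : 4 * M / (1 / 2) = 8 * M := by ring
  rw [← hradius]
  refine landau_inequality (by norm_num) ((Real.log_pos hone).trans_le hM)
    (fun z _ => differentiable_riemannZeta₁.analyticAt z)
    (riemannZeta₁_ne_zero_of_one_le_re hs.le) (fun z hz => ?_) (fun z _ hz => ?_)
  · refine (norm_riemannZeta₁_le_mul_of_mem_closedBall hs hs'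
      (Metric.sphere_subset_closedBall hz)).trans ?_
    gcongr
    rwa [← Real.log_le_iff_le_exp (by linarith)]
  · by_contra! hlt
    exact riemannZeta₁_ne_zero_of_one_le_re (by linarith) hz

lemma le_re_logDeriv_riemannZeta₁_of_zero {β : ℝ} (hs : 1 < s.re) (hs' : s.re ≤ 3 / 2)
    (hM : Real.log (12 * (|s.im| + 3) ^ 2 / (s.re - 1) ^ 2) ≤ M)
    (hβ : s.re - 1 / 2 ≤ β) (hβ' : β < s.re) (hzero : riemannZeta₁ (β + s.im * I) = 0) :
    1 / (s.re - β) - 2 - 8 * M ≤ (logDeriv riemannZeta₁ s).re := by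
  have hpos : 0 < s.re - β := by linarith
  have hnorm : ‖s - (β + s.im * I)‖ = s.re - β := by
    rw [show s - (β + s.im * I) = (s.re - β : ℝ) by apply Complex.ext <;> simp, norm_real,
      Real.norm_of_nonneg hpos.le]
  have hball : (β + s.im * I : ℂ) ∈ Metric.closedBall s (1 / 2) := by
    rw [mem_closedBall_iff_norm', hnorm]
    linarith
  have hterm : landauTerm s (1 / 2) (β + s.im * I) = 1 / (s.re - β) - 4 * (s.re - β) := by
    rw [landauTerm_eq, hnorm]
    simp only [add_re, ofReal_re, mul_re, I_re, I_im, ofReal_im, mul_zero, mul_one, sub_self,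
      add_zero]
    field_simp
    ring
  have h := (landau_riemannZeta₁ hs hs' hM).2 _ hball hzero
  rw [hterm] at h
  linarith

end Landau

lemma four_div_sub_le_of_riemannZeta₁_eq_zero {σ β t M : ℝ} (hσ : 1 < σ) (hσ' : σ ≤ 3 / 2)
    (ht : 1 ≤ |t|) (hM : Real.log (48 * (|t| + 3) ^ 2 / (σ - 1) ^ 2) ≤ M)
    (hβ : σ - 1 / 2 ≤ β) (hβ' : β < σ) (hzero : riemannZeta₁ (β + t * I) = 0) :
    4 / (σ - β) ≤ 3 / (σ - 1) + 21 / 2 + 64 * M := by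
  have hlog {u : ℝ} (hu : |u| ≤ 2 * |t|) :
      Real.log (12 * (|u| + 3) ^ 2 / (σ - 1) ^ 2) ≤ M := by
    refine (Real.log_le_log (by positivity) ?_).trans hM
    gcongr ?_ / _
    nlinarith [abs_nonneg u]
  have h₀ : -(8 * M) ≤ (logDeriv riemannZeta₁ σ).re :=
    (landau_riemannZeta₁ (by simpa using hσ) (by simpa using hσ')
      (by simpa using hlog (u := 0) (by simp))).1
  have h₁ : 1 / (σ - β) - 2 - 8 * M ≤ (logDeriv riemannZeta₁ (σ + t * I)).re := by
    simpa using le_re_logDeriv_riemannZeta₁_of_zero (s := σ + t * I) (M := M) (β := β)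
      (by simpa using hσ) (by simpa using hσ')
      (by simpa using hlog (u := t) (by linarith [abs_nonneg t])) (by simpa using hβ)
      (by simpa using hβ') (by simpa using hzero)
  have h₂ : -(8 * M) ≤ (logDeriv riemannZeta₁ (σ + (2 * t : ℝ) * I)).re :=
    (landau_riemannZeta₁ (by simpa using hσ) (by simpa using hσ')
      (by simpa using hlog (u := 2 * t) (by simp [abs_mul]))).1
  have hpole {u : ℝ} (hu : 1 ≤ |u|) : (1 / ((σ : ℂ) + u * I - 1)).re ≤ 1 / 2 :=
    re_one_div_le_half (by simp; linarith) (by simpa using hu)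
  have h := logDeriv_riemannZeta₁_three_four_one hσ t
  have hpole₂ := hpole (u := 2 * t) (by rw [abs_mul, abs_two]; linarith)
  linarith [hpole ht, mul_one_div 4 (σ - β)]

lemma log_forty_eight_mul_sq_mul_sq_le {τ : ℝ} (hτ : 1 ≤ Real.log τ) :
    Real.log (48 * τ ^ 2 * (4096 * Real.log τ) ^ 2) ≤ 26 * Real.log τ := by
  have hτ0 : τ ≠ 0 := by
    rintro rfl
    norm_num at hτ
  have hlog48 : Real.log 48 ≤ 6 * Real.log 2 := by
    rw [← Nat.cast_ofNat (n := 6), ← Real.log_pow]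
    exact Real.log_le_log (by norm_num) (by norm_num)
  have hlog4096 : Real.log 4096 = 12 * Real.log 2 := by
    rw [← Nat.cast_ofNat (n := 12), ← Real.log_pow]
    norm_num
  have hloglog := Real.log_le_sub_one_of_pos (zero_lt_one.trans_le hτ)
  rw [Real.log_mul (by positivity) (by positivity), Real.log_mul (by norm_num) (by positivity),
    Real.log_pow, Real.log_pow, Real.log_mul (by norm_num) (by positivity)]
  push_cast
  linarith [Real.log_two_lt_d9]

lemma one_le_log_abs_add_three (t : ℝ) : 1 ≤ Real.log (|t| + 3) := by
  rw [Real.le_log_iff_exp_le (by positivity)]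
  linarith [abs_nonneg t, Real.exp_one_lt_three]

/- The choice `σ = 1 + 1 / (4096 log τ)` makes the error `64 * 26 log τ` smaller than
`1 / (2 (σ - 1))`, so that `4 / (σ - β) ≤ 3.5 / (σ - 1)`. -/
lemma re_le_of_riemannZeta₁_eq_zero {s : ℂ} (him : 1 ≤ |s.im|) (hzero : riemannZeta₁ s = 0) :
    s.re ≤ 1 - 1 / (28672 * Real.log (|s.im| + 3)) := by
  have hL := one_le_log_abs_add_three s.im
  set L := Real.log (|s.im| + 3)
  have hk : 1 / (4096 * L) ≤ 1 / 4096 := by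
    gcongr
    linarith
  have hk0 : 0 < 1 / (4096 * L) := by positivity
  have hk7 : 1 / (28672 * L) = 1 / (4096 * L) / 7 := by
    field_simp
    norm_num
  have hre : s.re < 1 := by
    by_contra! h
    exact riemannZeta₁_ne_zero_of_one_le_re h hzero
  rcases lt_or_ge s.re (1 + 1 / (4096 * L) - 1 / 2) with hfar | hnear
  · linarith
  have hM : Real.log (48 * (|s.im| + 3) ^ 2 / (1 + 1 / (4096 * L) - 1) ^ 2) ≤ 26 * L := by
    rw [add_sub_cancel_left, one_div, inv_pow, div_inv_eq_mul]
    exact log_forty_eight_mul_sq_mul_sq_le hL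
  have h := four_div_sub_le_of_riemannZeta₁_eq_zero (by linarith) (by linarith) him hM hnear
    (by linarith) (by rwa [re_add_im])
  have hsimp : 3 / (1 + 1 / (4096 * L) - 1) = 3 * (4096 * L) := by
    rw [add_sub_cancel_left, div_div_eq_mul_div, div_one]
  have hpos : 0 < 1 + 1 / (4096 * L) - s.re := by linarith
  have hgap : 4 ≤ 7 / 2 * (4096 * L) * (1 + 1 / (4096 * L) - s.re) :=
    (div_le_iff₀ hpos).mp (by linarith)
  have hgap' : 8 / 7 * (1 / (4096 * L)) ≤ 1 + 1 / (4096 * L) - s.re := by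
    rw [mul_one_div, div_le_iff₀ (by positivity)]
    linarith
  linarith

lemma exists_riemannZeta₁_ne_zero_of_abs_im_le_one :
    ∃ δ : ℝ, 0 < δ ∧ ∀ s : ℂ, |s.im| ≤ 1 → 1 - δ < s.re → riemannZeta₁ s ≠ 0 := by
  have hK : IsCompact ({1} ×ℂ Set.Icc (-1 : ℝ) 1) := isCompact_singleton.reProdIm isCompact_Icc
  have hU : IsOpen {s : ℂ | riemannZeta₁ s ≠ 0} :=
    isOpen_ne.preimage differentiable_riemannZeta₁.continuous
  obtain ⟨δ, hδ, hsub⟩ := hK.exists_thickening_subset_open hU fun s hs =>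
    riemannZeta₁_ne_zero_of_one_le_re (mem_reProdIm.mp hs).1.ge
  refine ⟨δ, hδ, fun s him hre => ?_⟩
  rcases le_or_gt 1 s.re with h | h
  · exact riemannZeta₁_ne_zero_of_one_le_re h
  refine hsub (Metric.mem_thickening_iff.mpr ⟨1 + s.im * I, ?_, ?_⟩)
  · simpa [mem_reProdIm] using abs_le.mp him
  · have hdiff : s - (1 + s.im * I) = ((s.re - 1 : ℝ) : ℂ) := by apply Complex.ext <;> simp
    rw [dist_eq_norm, hdiff, norm_real, Real.norm_eq_abs, abs_of_neg (by linarith)]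
    linarith

theorem exists_zeroFree_region_riemannZeta₁ :
    ∃ c : ℝ, 0 < c ∧ c ≤ 1 / 4 ∧
      ∀ s : ℂ, 1 - c / Real.log (|s.im| + 3) ≤ s.re → riemannZeta₁ s ≠ 0 := by
  obtain ⟨δ, hδ, hδzero⟩ := exists_riemannZeta₁_ne_zero_of_abs_im_le_one
  refine ⟨min (1 / 28673) (δ / 2), by positivity, (min_le_left _ _).trans (by norm_num),
    fun s hs => ?_⟩
  have hL := one_le_log_abs_add_three s.im
  rcases le_or_gt |s.im| 1 with him | him
  · have hle : min (1 / 28673) (δ / 2) / Real.log (|s.im| + 3) ≤ δ / 2 :=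
      (div_le_self (by positivity) hL).trans (min_le_right _ _)
    exact hδzero s him (by linarith)
  · intro hzero
    have hle : min (1 / 28673) (δ / 2) / Real.log (|s.im| + 3) ≤
        1 / (28673 * Real.log (|s.im| + 3)) := by
      rw [← div_div]
      gcongr
      exact min_le_left _ _
    have hlt : 1 / (28673 * Real.log (|s.im| + 3)) < 1 / (28672 * Real.log (|s.im| + 3)) := by
      gcongr
      norm_num
    linarith [re_le_of_riemannZeta₁_eq_zero him.le hzero]

end ZeroFreeRegion

section InverseBound

open Complex

/- Borel–Carathéodory on a disc of radius `65 (σ - 1)` about `s = σ + it`, evaluated at distance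
`2 (σ - 1)` from the centre: the exponent `1 / 8` bounds `2 · 2 / (65 - 2)`. -/
lemma norm_inv_riemannZeta₁_le_of_ne_zero_on_ball {s z : ℂ} (hs : 1 < s.re)
    (hs' : s.re ≤ 1 + 1 / 130)
    (hne : ∀ w ∈ Metric.ball s (65 * (s.re - 1)), riemannZeta₁ w ≠ 0)
    (hz : ‖z - s‖ ≤ 2 * (s.re - 1)) :
    ‖(riemannZeta₁ z)⁻¹‖ ≤
      3 / (s.re - 1) ^ 2 * (12 * (|s.im| + 3) ^ 2 / (s.re - 1) ^ 2) ^ (1 / 8 : ℝ) := by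
  set B := 12 * (|s.im| + 3) ^ 2 / (s.re - 1) ^ 2 with hB
  have hB1 : 1 < B := by
    rw [hB, lt_div_iff₀ (pow_pos (by linarith) 2)]
    nlinarith [abs_nonneg s.im]
  have hM := Real.log_pos hB1
  have hgrowth : ∀ w ∈ Metric.ball s (65 * (s.re - 1)),
      ‖riemannZeta₁ w‖ ≤ Real.exp (Real.log B) * ‖riemannZeta₁ s‖ := fun w hw => by
    rw [Real.exp_log (by linarith)]
    exact norm_riemannZeta₁_le_mul_of_mem_closedBall hs (by linarith)
      (Metric.ball_subset_closedBall (Metric.ball_subset_ball (by linarith) hw))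
  have hbelow := norm_ge_mul_exp_of_ne_zero_on_ball hM
    differentiable_riemannZeta₁.differentiableOn hne hgrowth (z := z)
    (mem_ball_iff_norm.mpr (by linarith))
  have hexponent : 2 * Real.log B * ‖z - s‖ / (65 * (s.re - 1) - ‖z - s‖) ≤ Real.log B / 8 := by
    rw [div_le_iff₀ (by linarith)]
    nlinarith
  have hcentre : (s.re - 1) ^ 2 / 3 ≤ ‖riemannZeta₁ s‖ := by
    refine le_trans ?_ (le_norm_riemannZeta₁ hs)
    gcongr <;> linarith
  have hrpow : Real.exp (-(Real.log B / 8)) = (B ^ (1 / 8 : ℝ))⁻¹ := by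
    rw [Real.exp_neg, Real.rpow_def_of_pos (by linarith), mul_one_div]
  rw [norm_inv]
  calc ‖riemannZeta₁ z‖⁻¹ ≤ ((s.re - 1) ^ 2 / 3 * (B ^ (1 / 8 : ℝ))⁻¹)⁻¹ := by
        refine inv_anti₀ (by positivity) (le_trans ?_ hbelow)
        rw [← hrpow]
        gcongr
    _ = 3 / (s.re - 1) ^ 2 * B ^ (1 / 8 : ℝ) := by rw [mul_inv, inv_inv, inv_div]

lemma three_div_sq_mul_rpow_le {a W : ℝ} (ha : 0 < a) (ha' : a ≤ 1) (hW : 1 ≤ Real.log W)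
    (hW0 : 0 < W) :
    3 / (a / Real.log W) ^ 2 * (12 * W ^ 2 / (a / Real.log W) ^ 2) ^ (1 / 8 : ℝ) ≤
      36 * (8 / a) ^ 4 * W ^ (3 / 4 : ℝ) := by
  set η := a / Real.log W with hη
  have hη0 : 0 < η := by positivity
  have hη1 : η ≤ 1 := (div_le_one (by linarith)).mpr (by linarith)
  have hconst : (12 / η ^ 2) ^ (1 / 8 : ℝ) ≤ 12 / η ^ 2 := by
    refine Real.rpow_le_self_of_one_le ?_ (by norm_num)
    rw [le_div_iff₀ (by positivity)]
    nlinarith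
  have hpow : (W ^ 2) ^ (1 / 8 : ℝ) = W ^ (1 / 4 : ℝ) := by
    rw [← Real.rpow_natCast, ← Real.rpow_mul hW0.le]
    norm_num
  have hpow' : (W ^ (1 / 8 : ℝ)) ^ 4 = W ^ (1 / 2 : ℝ) := by
    rw [← Real.rpow_natCast, ← Real.rpow_mul hW0.le]
    norm_num
  have hinv : 1 / η ≤ 8 / a * W ^ (1 / 8 : ℝ) := by
    rw [hη, one_div_div, div_mul_eq_mul_div]
    gcongr
    linarith [Real.log_le_rpow_div hW0.le (by norm_num : (0 : ℝ) < 1 / 8)]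
  calc 3 / η ^ 2 * (12 * W ^ 2 / η ^ 2) ^ (1 / 8 : ℝ)
      = 3 / η ^ 2 * ((12 / η ^ 2) ^ (1 / 8 : ℝ) * W ^ (1 / 4 : ℝ)) := by
        rw [mul_div_right_comm, Real.mul_rpow (by positivity) (by positivity), hpow]
    _ ≤ 3 / η ^ 2 * (12 / η ^ 2 * W ^ (1 / 4 : ℝ)) := by gcongr
    _ = 36 * (1 / η) ^ 4 * W ^ (1 / 4 : ℝ) := by
        field_simp
        norm_num
    _ ≤ 36 * (8 / a * W ^ (1 / 8 : ℝ)) ^ 4 * W ^ (1 / 4 : ℝ) := by gcongr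
    _ = 36 * (8 / a) ^ 4 * W ^ (3 / 4 : ℝ) := by
        rw [mul_pow, hpow', ← mul_assoc, mul_assoc _ (W ^ _), ← Real.rpow_add hW0]
        norm_num

theorem exists_norm_inv_riemannZeta₁_le_in_strip : ∃ a : ℝ, 0 < a ∧ a ≤ 1 / 4 ∧ ∃ K : ℝ, 0 < K ∧
    ∀ (W : ℝ) (s : ℂ), |s.im| + 4 ≤ W → 1 - a / Real.log W ≤ s.re → s.re ≤ 1 + a / Real.log W →
      riemannZeta₁ s ≠ 0 ∧ ‖(riemannZeta₁ s)⁻¹‖ ≤ K * W ^ (3 / 4 : ℝ) := by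
  obtain ⟨c, hc0, hc, hzero⟩ := exists_zeroFree_region_riemannZeta₁
  refine ⟨c / 64, by positivity, by linarith, 36 * (8 / (c / 64)) ^ 4, by positivity,
    fun W s hW hle hge => ?_⟩
  have hlog (t : ℝ) (ht : |t| + 3 ≤ W) : Real.log (|t| + 3) ≤ Real.log W :=
    Real.log_le_log (by positivity) ht
  have hL : 1 ≤ Real.log W := (one_le_log_abs_add_three s.im).trans (hlog _ (by linarith))
  set η := c / 64 / Real.log W with hη
  have hη0 : 0 < η := by positivity
  have hη1 : η ≤ 1 / 256 := (div_le_self (by positivity) hL).trans (by linarith)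
  have hne (z : ℂ) (him : |z.im| + 3 ≤ W) (hre : 1 - 64 * η ≤ z.re) : riemannZeta₁ z ≠ 0 := by
    have hη64 : 64 * η ≤ c / Real.log (|z.im| + 3) := by
      rw [show 64 * η = c / Real.log W by rw [hη]; ring]
      have := one_le_log_abs_add_three z.im
      gcongr
    exact hzero z (by linarith)
  refine ⟨hne s (by linarith) (by linarith), ?_⟩
  set s₀ : ℂ := ⟨1 + η, s.im⟩
  have hs₀ : s₀.re - 1 = η := add_sub_cancel_left 1 η
  have hdist : ‖s - s₀‖ ≤ 2 * η := by
    rw [show s - s₀ = (s.re - (1 + η) : ℝ) by apply Complex.ext <;> simp [s₀], norm_real,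
      Real.norm_eq_abs, abs_le]
    constructor <;> linarith
  have hball : ∀ w ∈ Metric.ball s₀ (65 * (s₀.re - 1)), riemannZeta₁ w ≠ 0 := fun w hw => by
    rw [hs₀, mem_ball_iff_norm] at hw
    have hre := (abs_le.mp ((abs_re_le_norm (w - s₀)).trans hw.le)).1
    have him : |w.im - s.im| ≤ 65 * η := (abs_im_le_norm (w - s₀)).trans hw.le
    rw [sub_re] at hre
    exact hne w (by linarith [abs_sub_abs_le_abs_sub w.im s.im]) (by linarith)
  have h := norm_inv_riemannZeta₁_le_of_ne_zero_on_ball (by linarith) (by linarith) hball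
    (by rwa [hs₀])
  rw [hs₀] at h
  refine h.trans (le_trans ?_
    (three_div_sq_mul_rpow_le (by positivity) (by linarith) hL (by linarith [abs_nonneg s.im])))
  gcongr
  exact (by linarith : |s.im| + 3 ≤ W)

end InverseBound

section SmoothedPerron

open Complex MeasureTheory

/-- The partial sum `∑_{n ≤ x} f n`. -/
noncomputable def partialSum (f : ℕ → ℂ) (x : ℝ) : ℂ := ∑ n ∈ Icc 1 ⌊x⌋₊, f n

/-- The Riesz mean of order one `∑_{n ≤ x} (1 - n / x) f n`, a partial sum with a continuous
cut-off, for which Perron's integral converges absolutely. -/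
noncomputable def rieszMean (f : ℕ → ℂ) (x : ℝ) : ℂ :=
  ∑ n ∈ Icc 1 ⌊x⌋₊, (1 - n / x : ℝ) * f n

/-- The weight `max 0 (1 - t)` of the Riesz mean at `t = n / x`. -/
noncomputable def tent (t : ℝ) : ℂ := (max 0 (1 - t) : ℝ)

/-- The kernel `x ^ s / (s (s + 1))` of the Perron integral for Riesz means of order one. -/
noncomputable def perronKernel (x : ℝ) (s : ℂ) : ℂ := (x : ℂ) ^ s / (s * (s + 1))

lemma tent_eq_indicator_sub {t : ℝ} (ht : 0 < t) :
    tent t = (Set.Ioc 0 1).indicator (fun _ => (1 : ℂ)) t -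
      (Set.Ioc (0 : ℝ) 1).indicator (fun t : ℝ => (t : ℂ) ^ (1 : ℂ)) t := by
  rcases le_or_gt t 1 with h | h
  · have hmem : t ∈ Set.Ioc 0 1 := ⟨ht, h⟩
    rw [tent, max_eq_right (by linarith), Set.indicator_of_mem hmem, Set.indicator_of_mem hmem,
      cpow_one, ofReal_sub, ofReal_one]
  · have hmem : t ∉ Set.Ioc 0 1 := fun hmem => h.not_ge hmem.2
    rw [tent, max_eq_left (by linarith), Set.indicator_of_notMem hmem,
      Set.indicator_of_notMem hmem, ofReal_zero, sub_zero]

variable {s : ℂ}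

lemma mul_add_one_ne_zero (hs : 0 < s.re) : s * (s + 1) ≠ 0 := by
  refine mul_ne_zero (fun h => by simp [h] at hs) fun h => ?_
  have := congrArg re h
  rw [add_re, one_re, zero_re] at this
  linarith

lemma hasMellin_tent (hs : 0 < s.re) : HasMellin tent s (1 / (s * (s + 1))) := by
  have hne := mul_add_one_ne_zero hs
  have hone := hasMellin_one_Ioc hs
  have hid := hasMellin_cpow_Ioc 1 (s := s) (by simp only [one_re]; linarith)
  have hsub := hasMellin_sub hone.1 hid.1
  have hval : 1 / s - 1 / (s + 1) = 1 / (s * (s + 1)) := by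
    have := left_ne_zero_of_mul hne
    have := right_ne_zero_of_mul hne
    field_simp
    ring
  rw [hone.2, hid.2, hval] at hsub
  have hcongr : Set.EqOn (fun t : ℝ => (t : ℂ) ^ (s - 1) • tent t) _ (Set.Ioi 0) := fun t ht =>
    congrArg ((t : ℂ) ^ (s - 1) • ·) (tent_eq_indicator_sub ht)
  exact ⟨hsub.1.congr_fun hcongr.symm measurableSet_Ioi,
    (setIntegral_congr_fun measurableSet_Ioi hcongr).trans hsub.2⟩

lemma norm_one_div_mul_add_one_le (hs : 0 < s.re) :
    ‖1 / (s * (s + 1))‖ ≤ (1 + 1 / s.re ^ 2) * (1 + s.im ^ 2)⁻¹ := by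
  have hsq : ‖s‖ ^ 2 ≤ ‖s * (s + 1)‖ := by
    rw [norm_mul, sq]
    gcongr
    rw [norm_def, norm_def]
    apply Real.sqrt_le_sqrt
    rw [normSq_apply, normSq_apply, add_re, add_im, one_re, one_im, add_zero]
    nlinarith
  have hpos : 0 < ‖s‖ ^ 2 := by
    rw [← normSq_eq_norm_sq, normSq_apply]
    nlinarith [mul_self_nonneg s.im]
  rw [norm_div, norm_one]
  refine (one_div_le_one_div_of_le hpos hsq).trans ?_
  rw [← normSq_eq_norm_sq, normSq_apply, ← div_eq_mul_inv, one_add_div (by positivity), div_div,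
    div_le_div_iff₀ (by nlinarith [mul_self_nonneg s.im]) (by positivity)]
  nlinarith [sq_nonneg (s.re ^ 2), sq_nonneg s.im]

variable {σ x : ℝ}

lemma norm_perronKernel_le (hs : 0 < s.re) (hx : 0 < x) :
    ‖perronKernel x s‖ ≤ x ^ s.re * ((1 + 1 / s.re ^ 2) * (1 + s.im ^ 2)⁻¹) := by
  rw [perronKernel, div_eq_mul_one_div, norm_mul, norm_cpow_eq_rpow_re_of_pos hx]
  gcongr
  exact norm_one_div_mul_add_one_le hs

lemma differentiableAt_perronKernel (hs : 0 < s.re) (hx : x ≠ 0) :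
    DifferentiableAt ℂ (perronKernel x) s :=
  (differentiableAt_id.const_cpow (.inl (ofReal_ne_zero.mpr hx))).div (by fun_prop)
    (mul_add_one_ne_zero hs)

lemma continuous_comp_verticalLine {F : ℂ → ℂ} (hF : ∀ s : ℂ, s.re = σ → ContinuousAt F s) :
    Continuous fun y : ℝ => F (σ + y * I) :=
  continuous_iff_continuousAt.mpr fun y => (hF _ (by simp)).comp (by fun_prop)

lemma continuous_perronKernel_verticalLine (hσ : 0 < σ) (hx : x ≠ 0) :
    Continuous fun y : ℝ => perronKernel x (σ + y * I) :=
  continuous_comp_verticalLine fun _ hs =>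
    (differentiableAt_perronKernel (hs ▸ hσ) hx).continuousAt

lemma integrable_perronKernel_verticalLine (hσ : 0 < σ) (hx : 0 < x) :
    Integrable fun y : ℝ => perronKernel x (σ + y * I) := by
  refine ((integrable_inv_one_add_sq.const_mul (1 + 1 / σ ^ 2)).const_mul (x ^ σ)).mono'
    (continuous_perronKernel_verticalLine hσ hx.ne').aestronglyMeasurable (.of_forall fun y => ?_)
  simpa using norm_perronKernel_le (s := σ + y * I) (by simpa using hσ) hx

lemma integral_perronKernel (hσ : 0 < σ) (hx : 0 < x) :
    (1 / (2 * Real.pi)) • ∫ y : ℝ, perronKernel x (σ + y * I) = tent x⁻¹ := by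
  have hmellin (y : ℝ) : mellin tent (σ + y * I) = 1 / ((σ + y * I) * (σ + y * I + 1)) :=
    (hasMellin_tent (by simpa using hσ)).2
  have hkernel (y : ℝ) : perronKernel x (σ + y * I) =
      ((x⁻¹ : ℝ) : ℂ) ^ (-(σ + y * I : ℂ)) • mellin tent (σ + y * I) := by
    rw [hmellin, perronKernel, ofReal_inv, inv_cpow _ _ (by simp [arg_ofReal_of_nonneg hx.le,
      Real.pi_ne_zero.symm]), cpow_neg, inv_inv, smul_eq_mul, div_eq_mul_one_div]
  have hvert : VerticalIntegrable (mellin tent) σ := by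
    simp_rw [VerticalIntegrable, hmellin]
    simpa [perronKernel] using integrable_perronKernel_verticalLine hσ one_pos
  have hinv := mellinInv_mellin_eq σ tent (inv_pos.mpr hx)
    (hasMellin_tent (by simpa using hσ)).1 hvert (by unfold tent; fun_prop)
  simp_rw [hkernel]
  exact hinv

variable {f : ℕ → ℂ}

lemma integral_term_mul_perronKernel (hσ : 0 < σ) (hx : 0 < x) (f : ℕ → ℂ) {n : ℕ} (hn : n ≠ 0) :
    (1 / (2 * Real.pi)) • ∫ y : ℝ, LSeries.term f (σ + y * I) n * perronKernel x (σ + y * I) =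
      f n * tent (n / x) := by
  have hn0 : (0 : ℝ) < n := by positivity
  have hterm (y : ℝ) : LSeries.term f (σ + y * I) n * perronKernel x (σ + y * I) =
      f n * perronKernel (x / n) (σ + y * I) := by
    have hcpow : ((x / n : ℝ) : ℂ) ^ (σ + y * I : ℂ) =
        (x : ℂ) ^ (σ + y * I : ℂ) / (n : ℂ) ^ (σ + y * I : ℂ) := by
      rw [ofReal_div, div_cpow_ofReal_nonneg hx.le hn0.le, ofReal_natCast]
    rw [LSeries.term_of_ne_zero hn, perronKernel, perronKernel, hcpow]
    ring
  simp_rw [hterm]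
  rw [integral_const_mul, ← mul_smul_comm, integral_perronKernel hσ (by positivity), inv_div]

lemma norm_term_verticalLine (f : ℕ → ℂ) (σ y : ℝ) (n : ℕ) :
    ‖LSeries.term f (σ + y * I) n‖ = ‖LSeries.term f σ n‖ := by
  simp [LSeries.norm_term_eq]

lemma continuous_term_verticalLine (f : ℕ → ℂ) (σ : ℝ) (n : ℕ) :
    Continuous fun y : ℝ => LSeries.term f (σ + y * I) n := by
  rcases eq_or_ne n 0 with rfl | hn
  · simpa using continuous_const
  have hnc : (n : ℂ) ≠ 0 := Nat.cast_ne_zero.mpr hn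
  simp only [LSeries.term_of_ne_zero hn]
  exact continuous_const.div (.const_cpow (by fun_prop) (.inl hnc)) fun y =>
    by simp [cpow_eq_zero_iff, hnc]

lemma hasSum_integral_term_mul_perronKernel (hσ : 0 < σ) (hx : 0 < x)
    (hf : LSeriesSummable f σ) :
    HasSum (fun n => ∫ y : ℝ, LSeries.term f (σ + y * I) n * perronKernel x (σ + y * I))
      (∫ y : ℝ, LSeries f (σ + y * I) * perronKernel x (σ + y * I)) := by
  have hkernel := integrable_perronKernel_verticalLine hσ hx
  have hnorm (n : ℕ) (y : ℝ) : ‖LSeries.term f (σ + y * I) n * perronKernel x (σ + y * I)‖ =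
      ‖LSeries.term f σ n‖ * ‖perronKernel x (σ + y * I)‖ := by
    rw [norm_mul, norm_term_verticalLine]
  have hint_term (n : ℕ) : Integrable fun y : ℝ =>
      LSeries.term f (σ + y * I) n * perronKernel x (σ + y * I) :=
    (hkernel.norm.const_mul ‖LSeries.term f σ n‖).mono'
      ((continuous_term_verticalLine f σ n).aestronglyMeasurable.mul hkernel.aestronglyMeasurable)
      (.of_forall fun y => (hnorm n y).le)
  have h := hasSum_integral_of_summable_integral_norm hint_term (by
    simp_rw [hnorm, integral_const_mul]
    exact hf.norm.mul_right _)
  simpa only [tsum_mul_right, LSeries] using h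

lemma tent_eq_zero_of_one_le {t : ℝ} (ht : 1 ≤ t) : tent t = 0 := by
  rw [tent, max_eq_left (by linarith), ofReal_zero]

lemma tent_of_le_one {t : ℝ} (ht : t ≤ 1) : tent t = (1 - t : ℝ) := by
  rw [tent, max_eq_right (by linarith)]

lemma hasSum_rieszMean (f : ℕ → ℂ) (hx : 0 < x) :
    HasSum (fun n : ℕ => if n = 0 then 0 else f n * tent (n / x)) (rieszMean f x) := by
  have hfin : rieszMean f x =
      ∑ n ∈ Icc 1 ⌊x⌋₊, if n = 0 then 0 else f n * tent (n / x) := by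
    refine sum_congr rfl fun n hn => ?_
    obtain ⟨hn1, hnx⟩ := Finset.mem_Icc.mp hn
    rw [if_neg (by omega), tent_of_le_one ((div_le_one hx).mpr ((Nat.le_floor_iff hx.le).mp hnx)),
      mul_comm]
  rw [hfin]
  refine hasSum_sum_of_ne_finset_zero fun n hn => ?_
  split_ifs with h
  · rfl
  · have hlt : x < n := (Nat.floor_lt hx.le).mp (by
      by_contra! hle
      exact hn (Finset.mem_Icc.mpr ⟨Nat.pos_of_ne_zero h, hle⟩))
    rw [tent_eq_zero_of_one_le ((one_le_div hx).mpr hlt.le), mul_zero]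

theorem rieszMean_eq_integral (hσ : 0 < σ) (hx : 0 < x) (hf : LSeriesSummable f σ) :
    rieszMean f x =
      (1 / (2 * Real.pi)) • ∫ y : ℝ, LSeries f (σ + y * I) * perronKernel x (σ + y * I) := by
  refine (hasSum_rieszMean f hx).unique ?_
  convert (hasSum_integral_term_mul_perronKernel hσ hx hf).const_smul (1 / (2 * Real.pi)) using 2
    with n
  split_ifs with hn
  · simp [hn]
  · exact (integral_term_mul_perronKernel hσ hx f hn).symm

end SmoothedPerron

section ContourShift

open Complex MeasureTheory

lemma norm_integral_le_norm_intervalIntegral_add {E : Type*} [NormedAddCommGroup E]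
    [NormedSpace ℝ E] {f : ℝ → E} {A T : ℝ} (hT : 0 < T) (hf : Integrable f)
    (hbound : ∀ y, ‖f y‖ ≤ A * (1 + y ^ 2)⁻¹) :
    ‖∫ y, f y‖ ≤ ‖∫ y in -T..T, f y‖ + 2 * A / T := by
  have hA : 0 ≤ A := by simpa using (norm_nonneg _).trans (hbound 0)
  have harctan : π / 2 - Real.arctan T ≤ T⁻¹ := by
    rw [← Real.arctan_inv_of_pos hT]
    simpa using Real.le_tan (Real.arctan_nonneg.mpr (by positivity))
      (Real.arctan_lt_pi_div_two T⁻¹)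
  have htail (S : Set ℝ) : ‖∫ y in S, f y‖ ≤ A * ∫ y in S, (1 + y ^ 2)⁻¹ := by
    rw [← integral_const_mul]
    exact norm_integral_le_of_norm_le (integrable_inv_one_add_sq.const_mul A).integrableOn
      (.of_forall hbound)
  have hright : ‖∫ y in Set.Ioi T, f y‖ ≤ A * T⁻¹ := by
    refine (htail _).trans ?_
    rw [integral_Ioi_inv_one_add_sq]
    gcongr
  have hleft : ‖∫ y in Set.Iic (-T), f y‖ ≤ A * T⁻¹ := by
    refine (htail _).trans ?_
    rw [integral_Iic_inv_one_add_sq, Real.arctan_neg]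
    gcongr
    linarith
  have hsplit : ∫ y, f y =
      (∫ y in -T..T, f y) + (∫ y in Set.Iic (-T), f y) + ∫ y in Set.Ioi T, f y := by
    rw [← intervalIntegral.integral_Iic_add_Ioi (b := T) hf.integrableOn hf.integrableOn,
      ← intervalIntegral.integral_Iic_sub_Iic (a := -T) (b := T) hf.integrableOn hf.integrableOn,
      sub_add_cancel]
  calc ‖∫ y, f y‖ ≤ ‖∫ y in -T..T, f y‖ + A * T⁻¹ + A * T⁻¹ := by
        rw [hsplit]
        exact norm_add₃_le.trans (by gcongr)
    _ = ‖∫ y in -T..T, f y‖ + 2 * A / T := by ring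

lemma norm_intervalIntegral_verticalLine_le {E : Type*} [NormedAddCommGroup E] [NormedSpace ℂ E]
    [CompleteSpace E] {F : ℂ → E} {σ₀ σ₁ T A B : ℝ} (hσ : σ₀ ≤ σ₁) (hT : 0 ≤ T)
    (hF : DifferentiableOn ℂ F (Set.Icc σ₀ σ₁ ×ℂ Set.Icc (-T) T))
    (hleft : ∀ s : ℂ, s.re = σ₀ → |s.im| ≤ T → ‖F s‖ ≤ A)
    (hhor : ∀ s : ℂ, s.re ∈ Set.Icc σ₀ σ₁ → |s.im| = T → ‖F s‖ ≤ B) :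
    ‖∫ y in -T..T, F (σ₁ + y * I)‖ ≤ 2 * T * A + 2 * (σ₁ - σ₀) * B := by
  have hrect := integral_boundary_rect_eq_zero_of_differentiableOn F ⟨σ₀, -T⟩ ⟨σ₁, T⟩ (by
    rwa [Set.uIcc_of_le hσ, Set.uIcc_of_le (by linarith)])
  have hvert : ‖∫ y in -T..T, F (σ₀ + y * I)‖ ≤ A * |T - -T| :=
    intervalIntegral.norm_integral_le_of_norm_le_const fun y hy => by
      rw [Set.uIoc_of_le (by linarith)] at hy
      exact hleft _ (by simp) (by simpa using abs_le.mpr ⟨hy.1.le, hy.2⟩)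
  have hhoriz (v : ℝ) (hv : |v| = T) : ‖∫ u in σ₀..σ₁, F (u + v * I)‖ ≤ B * |σ₁ - σ₀| :=
    intervalIntegral.norm_integral_le_of_norm_le_const fun u hu => by
      rw [Set.uIoc_of_le hσ] at hu
      exact hhor _ (by simpa using ⟨hu.1.le, hu.2⟩) (by simpa using hv)
  have hbottom := hhoriz (-T) (by rw [abs_neg, abs_of_nonneg hT])
  have htop := hhoriz T (abs_of_nonneg hT)
  rw [abs_of_nonneg (by linarith)] at hvert hbottom htop
  have hshift : I • ∫ y in -T..T, F (σ₁ + y * I) = (I • ∫ y in -T..T, F (σ₀ + y * I)) +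
      (∫ u in σ₀..σ₁, F (u + T * I)) - ∫ u in σ₀..σ₁, F (u + (-T : ℝ) * I) := by
    rw [← sub_eq_zero, ← hrect]
    abel
  calc ‖∫ y in -T..T, F (σ₁ + y * I)‖ = ‖I • ∫ y in -T..T, F (σ₁ + y * I)‖ := by
        rw [norm_smul, norm_I, one_mul]
    _ ≤ A * (T - -T) + B * (σ₁ - σ₀) + B * (σ₁ - σ₀) := by
        rw [hshift]
        refine (norm_sub_le _ _).trans (add_le_add ((norm_add_le _ _).trans ?_) hbottom)
        rw [norm_smul, norm_I, one_mul]
        exact add_le_add hvert htop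
    _ = 2 * T * A + 2 * (σ₁ - σ₀) * B := by ring

/-- The integrand `x ^ s / (s (s + 1) ζ(s))` of the Perron integral for the Riesz mean of `μ`,
written through the entire function `ζ₁(s) = (s - 1) ζ(s)` so that it is holomorphic at `s = 1`. -/
noncomputable def moebiusIntegrand (x : ℝ) (s : ℂ) : ℂ :=
  (s - 1) * perronKernel x s * (riemannZeta₁ s)⁻¹

variable {s : ℂ} {σ x : ℝ}

lemma moebiusIntegrand_eq_mul_inv_riemannZeta (hs : s ≠ 1) :
    moebiusIntegrand x s = (riemannZeta s)⁻¹ * perronKernel x s := by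
  have := sub_ne_zero.mpr hs
  rw [moebiusIntegrand, riemannZeta₁_eq_mul_riemannZeta hs, mul_inv]
  field_simp

lemma differentiableAt_moebiusIntegrand (hs : 0 < s.re) (hx : x ≠ 0) (hζ : riemannZeta₁ s ≠ 0) :
    DifferentiableAt ℂ (moebiusIntegrand x) s :=
  ((differentiableAt_id.sub_const 1).mul (differentiableAt_perronKernel hs hx)).mul
    ((differentiable_riemannZeta₁ s).inv hζ)

lemma norm_sub_one_mul_perronKernel_le (hs : 0 < s.re) (hx : 0 < x) :
    ‖(s - 1) * perronKernel x s‖ ≤ x ^ s.re / ‖s‖ := by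
  have hs0 : 0 < ‖s‖ := norm_pos_iff.mpr (left_ne_zero_of_mul (mul_add_one_ne_zero hs))
  have hs1 : 0 < ‖s + 1‖ := norm_pos_iff.mpr (right_ne_zero_of_mul (mul_add_one_ne_zero hs))
  have hreflect : ‖s - 1‖ ≤ ‖s + 1‖ := by
    rw [norm_def, norm_def]
    apply Real.sqrt_le_sqrt
    simp only [normSq_apply, sub_re, add_re, sub_im, add_im, one_re, one_im]
    nlinarith
  rw [perronKernel, norm_mul, norm_div, norm_mul, norm_cpow_eq_rpow_re_of_pos hx]
  calc ‖s - 1‖ * (x ^ s.re / (‖s‖ * ‖s + 1‖))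
      ≤ ‖s + 1‖ * (x ^ s.re / (‖s‖ * ‖s + 1‖)) := by gcongr
    _ = x ^ s.re / ‖s‖ := by field_simp

lemma norm_moebiusIntegrand_verticalLine_le (hσ : 1 < σ) (hx : 0 < x) (y : ℝ) :
    ‖moebiusIntegrand x (σ + y * I)‖ ≤
      x ^ σ * (1 + 1 / σ ^ 2) * ((2 * σ - 1) / (σ - 1)) * (1 + y ^ 2)⁻¹ := by
  have hre : (σ + y * I : ℂ).re = σ := by simp
  have him : (σ + y * I : ℂ).im = y := by simp
  have hζ := norm_inv_riemannZeta_le (s := σ + y * I) (by rwa [hre])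
  have hkernel := norm_perronKernel_le (s := σ + y * I) (by rw [hre]; linarith) hx
  rw [hre] at hζ hkernel
  rw [him] at hkernel
  rw [moebiusIntegrand_eq_mul_inv_riemannZeta (ne_one_of_one_lt_re (by rwa [hre])), norm_mul]
  have hfactor : 0 ≤ (2 * σ - 1) / (σ - 1) := (norm_nonneg _).trans hζ
  calc ‖(riemannZeta (σ + y * I))⁻¹‖ * ‖perronKernel x (σ + y * I)‖
      ≤ (2 * σ - 1) / (σ - 1) * (x ^ σ * ((1 + 1 / σ ^ 2) * (1 + y ^ 2)⁻¹)) := by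
        gcongr
    _ = _ := by ring

lemma integrable_moebiusIntegrand_verticalLine (hσ : 1 < σ) (hx : 0 < x) :
    Integrable fun y : ℝ => moebiusIntegrand x (σ + y * I) := by
  have hcont : Continuous fun y : ℝ => moebiusIntegrand x (σ + y * I) :=
    continuous_comp_verticalLine fun s hs =>
      (differentiableAt_moebiusIntegrand (by linarith) hx.ne'
        (riemannZeta₁_ne_zero_of_one_le_re (by linarith))).continuousAt
  exact (integrable_inv_one_add_sq.const_mul _).mono' hcont.aestronglyMeasurable
    (.of_forall (norm_moebiusIntegrand_verticalLine_le hσ hx))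

lemma norm_rieszMean_moebius_le_norm_integral (hσ : 1 < σ) (hx : 0 < x) :
    ‖rieszMean (fun n => (moebius n : ℂ)) x‖ ≤ ‖∫ y : ℝ, moebiusIntegrand x (σ + y * I)‖ := by
  have hintegrand (y : ℝ) :
      LSeries (fun n => (moebius n : ℂ)) (σ + y * I) * perronKernel x (σ + y * I) =
        moebiusIntegrand x (σ + y * I) := by
    have hre : 1 < (σ + y * I : ℂ).re := by simpa using hσ
    rw [LSeries_moebius_eq_inv_riemannZeta hre,
      moebiusIntegrand_eq_mul_inv_riemannZeta (ne_one_of_one_lt_re hre)]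
  have hperron := rieszMean_eq_integral (zero_lt_one.trans hσ) hx
    (LSeriesSummable_moebius_iff.mpr (by simpa using hσ))
  simp only [hintegrand] at hperron
  rw [hperron, norm_smul]
  refine mul_le_of_le_one_left (norm_nonneg _) ?_
  rw [Real.norm_of_nonneg (by positivity), div_le_one (by positivity)]
  linarith [Real.pi_gt_three]

lemma norm_rieszMean_moebius_le_norm_intervalIntegral_add {T : ℝ} (hσ : 1 < σ) (hσ2 : σ ≤ 2)
    (hx : 0 < x) (hT : 0 < T) :
    ‖rieszMean (fun n => (moebius n : ℂ)) x‖ ≤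
      ‖∫ y in -T..T, moebiusIntegrand x (σ + y * I)‖ + 12 * x ^ σ / (σ - 1) / T := by
  have hconst : (1 + 1 / σ ^ 2) * (2 * σ - 1) ≤ 6 := by
    have : 1 / σ ^ 2 ≤ 1 := (div_le_one (by positivity)).mpr (one_le_pow₀ hσ.le)
    nlinarith
  have : 0 < σ - 1 := sub_pos.mpr hσ
  calc ‖rieszMean (fun n => (moebius n : ℂ)) x‖
      ≤ ‖∫ y in -T..T, moebiusIntegrand x (σ + y * I)‖ +
          2 * (x ^ σ * (1 + 1 / σ ^ 2) * ((2 * σ - 1) / (σ - 1))) / T :=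
        (norm_rieszMean_moebius_le_norm_integral hσ hx).trans
          (norm_integral_le_norm_intervalIntegral_add hT
            (integrable_moebiusIntegrand_verticalLine hσ hx)
            (norm_moebiusIntegrand_verticalLine_le hσ hx))
    _ = ‖∫ y in -T..T, moebiusIntegrand x (σ + y * I)‖ +
          2 * (x ^ σ * ((1 + 1 / σ ^ 2) * (2 * σ - 1)) / (σ - 1)) / T := by ring
    _ ≤ ‖∫ y in -T..T, moebiusIntegrand x (σ + y * I)‖ + 2 * (x ^ σ * 6 / (σ - 1)) / T := by
        gcongr
    _ = _ := by ring

lemma norm_intervalIntegral_moebiusIntegrand_le {σ₀ σ₁ T B : ℝ} (hσ₀ : 1 / 2 ≤ σ₀)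
    (hσ : σ₀ ≤ σ₁) (hx : 1 ≤ x) (hT : 0 < T)
    (hζ : ∀ s : ℂ, s.re ∈ Set.Icc σ₀ σ₁ → |s.im| ≤ T →
      riemannZeta₁ s ≠ 0 ∧ ‖(riemannZeta₁ s)⁻¹‖ ≤ B) :
    ‖∫ y in -T..T, moebiusIntegrand x (σ₁ + y * I)‖ ≤
      4 * T * (x ^ σ₀ * B) + 2 * (σ₁ - σ₀) * (x ^ σ₁ / T * B) := by
  have hx0 : 0 < x := by linarith
  have hbound (s : ℂ) (hre : s.re ∈ Set.Icc σ₀ σ₁) (him : |s.im| ≤ T) {d : ℝ} (hd : 0 < d)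
      (hds : d ≤ ‖s‖) : ‖moebiusIntegrand x s‖ ≤ x ^ s.re / d * B := by
    have hkernel := norm_sub_one_mul_perronKernel_le (by linarith [hre.1]) hx0
    rw [moebiusIntegrand, norm_mul]
    gcongr
    · exact hkernel.trans (by gcongr)
    · exact (hζ s hre him).2
  convert norm_intervalIntegral_verticalLine_le (F := moebiusIntegrand x)
    (A := x ^ σ₀ / (1 / 2) * B) (B := x ^ σ₁ / T * B) hσ hT.le ?_ ?_ ?_ using 1
  · ring
  · intro s hs
    exact (differentiableAt_moebiusIntegrand (by linarith [hs.1.1]) hx0.ne'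
      (hζ s hs.1 (abs_le.mpr hs.2)).1).differentiableWithinAt
  · intro s hre him
    have hds : 1 / 2 ≤ ‖s‖ := (hσ₀.trans_eq hre.symm).trans (re_le_norm s)
    simpa only [hre] using hbound s (by rw [hre]; exact ⟨le_rfl, hσ⟩) him one_half_pos hds
  · intro s hre him
    have hB : 0 ≤ B := (norm_nonneg _).trans (hζ s hre him.le).2
    refine (hbound s hre him.le hT (him ▸ abs_im_le_norm s)).trans ?_
    gcongr
    exact hre.2

lemma rpow_one_add_one_div_log_le (hx : 1 < x) : x ^ (1 + 1 / Real.log x) ≤ 3 * x := by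
  have hx0 : 0 < x := by linarith
  rw [Real.rpow_add hx0, Real.rpow_one, Real.rpow_def_of_pos hx0,
    mul_one_div_cancel (Real.log_pos hx).ne', mul_comm]
  gcongr
  linarith [Real.exp_one_lt_d9]

lemma norm_rieszMean_moebius_le_of_norm_inv_riemannZeta₁_le {q T B : ℝ} (hx : 1 ≤ Real.log x)
    (hx0 : 0 < x) (hq0 : 0 ≤ q) (hq : q ≤ 1 / 2) (hT : 0 < T)
    (hζ : ∀ s : ℂ, s.re ∈ Set.Icc (1 - q) (1 + 1 / Real.log x) → |s.im| ≤ T →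
      riemannZeta₁ s ≠ 0 ∧ ‖(riemannZeta₁ s)⁻¹‖ ≤ B) :
    ‖rieszMean (fun n => (moebius n : ℂ)) x‖ ≤
      4 * T * x ^ (1 - q) * B + 9 * x * B / T + 36 * x * Real.log x / T := by
  have hx1 : 1 < x := (Real.log_pos_iff hx0.le).mp (by linarith)
  have hl0 : 0 < 1 / Real.log x := by positivity
  have hl1 : 1 / Real.log x ≤ 1 := (div_le_one (by linarith)).mpr hx
  have hB : 0 ≤ B :=
    (norm_nonneg _).trans (hζ 1 (by simpa using ⟨hq0, by linarith⟩) (by simpa using hT.le)).2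
  have hxσ := rpow_one_add_one_div_log_le hx1
  have hperron := norm_rieszMean_moebius_le_norm_intervalIntegral_add
    (σ := 1 + 1 / Real.log x) (by linarith) (by linarith) hx0 hT
  have hcontour := norm_intervalIntegral_moebiusIntegrand_le (by linarith) (by linarith) hx1.le hT
    hζ
  calc ‖rieszMean (fun n => (moebius n : ℂ)) x‖
      ≤ 4 * T * (x ^ (1 - q) * B) +
          2 * (1 + 1 / Real.log x - (1 - q)) * (x ^ (1 + 1 / Real.log x) / T * B) +
          12 * x ^ (1 + 1 / Real.log x) / (1 + 1 / Real.log x - 1) / T :=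
        hperron.trans (by gcongr)
    _ ≤ 4 * T * (x ^ (1 - q) * B) + 3 * (3 * x / T * B) +
          12 * (3 * x) / (1 + 1 / Real.log x - 1) / T := by
        gcongr
        · linarith
        · linarith
    _ = _ := by
        rw [add_sub_cancel_left]
        field_simp
        ring

lemma contour_bound_le {K W y l : ℝ} (hK : 0 ≤ K) (hx : 0 ≤ x) (hy : 0 ≤ y) (hl : 0 ≤ l)
    (hW : 8 ≤ W) :
    4 * (W - 4) * (x * y) * (K * W ^ (3 / 4 : ℝ)) + 9 * x * (K * W ^ (3 / 4 : ℝ)) / (W - 4) +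
        36 * x * l / (W - 4) ≤
      (18 * K + 72) * x * (W ^ (-(1 / 4) : ℝ) + l / W + W ^ 2 * y) := by
  have hinv : (W - 4)⁻¹ ≤ 2 / W := by
    rw [inv_eq_one_div, div_le_div_iff₀ (by linarith) (by linarith)]
    linarith
  have hrpow : W ^ (3 / 4 : ℝ) ≤ W := Real.rpow_le_self_of_one_le (by linarith) (by norm_num)
  have hdiv : W ^ (-(1 / 4) : ℝ) = W ^ (3 / 4 : ℝ) / W := by
    rw [← Real.rpow_sub_one (by linarith)]
    norm_num
  calc _ = 4 * (W - 4) * (x * y) * (K * W ^ (3 / 4 : ℝ)) +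
          9 * x * (K * W ^ (3 / 4 : ℝ)) * (W - 4)⁻¹ + 36 * x * l * (W - 4)⁻¹ := by
        simp only [div_eq_mul_inv]
    _ ≤ 4 * W * (x * y) * (K * W) + 9 * x * (K * W ^ (3 / 4 : ℝ)) * (2 / W) +
          36 * x * l * (2 / W) := by
        gcongr
        linarith
    _ = x * (18 * K * W ^ (-(1 / 4) : ℝ) + 72 * (l / W) + 4 * K * (W ^ 2 * y)) := by
        rw [hdiv]
        ring
    _ ≤ x * ((18 * K + 72) * W ^ (-(1 / 4) : ℝ) + (18 * K + 72) * (l / W) +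
          (18 * K + 72) * (W ^ 2 * y)) := by
        gcongr <;> linarith
    _ = _ := by ring

theorem exists_norm_rieszMean_moebius_le_add : ∃ a : ℝ, 0 < a ∧ ∃ K : ℝ, 0 < K ∧
    ∀ x W : ℝ, 0 < x → 8 ≤ W → Real.log W ≤ a * Real.log x →
      ‖rieszMean (fun n => (moebius n : ℂ)) x‖ ≤
        K * x * (W ^ (-(1 / 4) : ℝ) + Real.log x / W + W ^ 2 * x ^ (-(a / Real.log W))) := by
  obtain ⟨a, ha0, ha, K, hK, hζ⟩ := exists_norm_inv_riemannZeta₁_le_in_strip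
  refine ⟨a, ha0, 18 * K + 72, by positivity, fun x W hx hW hWx => ?_⟩
  have hL : 1 ≤ Real.log W := by
    rw [Real.le_log_iff_exp_le (by linarith)]
    linarith [Real.exp_one_lt_d9]
  have hl : 4 ≤ Real.log x := by nlinarith
  set q := a / Real.log W with hq
  have hq0 : 0 < q := by positivity
  have hq4 : q ≤ 1 / 4 := (div_le_self ha0.le hL).trans ha
  have hlq : 1 / Real.log x ≤ q := by
    rw [hq, div_le_div_iff₀ (by linarith) (by linarith)]
    linarith
  have hcontour := norm_rieszMean_moebius_le_of_norm_inv_riemannZeta₁_le (x := x) (T := W - 4)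
    (by linarith) hx hq0.le (by linarith) (by linarith)
    fun s hre him => hζ W s (by linarith) hre.1 (by linarith [hre.2])
  refine hcontour.trans ?_
  rw [sub_eq_add_neg 1 q, Real.rpow_add hx, Real.rpow_one]
  exact contour_bound_le hK.le hx.le (by positivity) (by linarith) hW

end ContourShift

section RieszMean

variable {f : ℕ → ℂ} {x : ℝ}

lemma norm_rieszMean_le (hf : ∀ n, ‖f n‖ ≤ 1) (hx : 0 < x) : ‖rieszMean f x‖ ≤ x := by
  have hterm : ∀ n ∈ Icc 1 ⌊x⌋₊, ‖((1 - n / x : ℝ) : ℂ) * f n‖ ≤ 1 := fun n hn => by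
    have hnx : n / x ≤ 1 :=
      (div_le_one hx).mpr ((Nat.le_floor_iff hx.le).mp (Finset.mem_Icc.mp hn).2)
    have hn0 : 0 ≤ n / x := by positivity
    rw [norm_mul, Complex.norm_real, Real.norm_of_nonneg (by linarith)]
    exact mul_le_one₀ (by linarith) (norm_nonneg _) (hf n)
  calc ‖rieszMean f x‖ ≤ ∑ _ ∈ Icc 1 ⌊x⌋₊, (1 : ℝ) := norm_sum_le_of_le _ hterm
    _ = ⌊x⌋₊ := by simp
    _ ≤ x := Nat.floor_le hx.le

lemma le_mul_exp_neg_sqrt_log_of_le {g : ℝ → ℝ} {c C R : ℝ} (hc : 0 ≤ c) (hC : 0 ≤ C)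
    (htriv : ∀ x, 1 ≤ x → g x ≤ x)
    (hlarge : ∀ x, 1 ≤ x → R ≤ √(Real.log x) → g x ≤ C * x * Real.exp (-c * √(Real.log x)))
    (hx : 1 ≤ x) : g x ≤ (C + Real.exp (c * R)) * x * Real.exp (-c * √(Real.log x)) := by
  rcases le_total R √(Real.log x) with hR | hR
  · refine (hlarge x hx hR).trans ?_
    gcongr
    exact le_add_of_nonneg_right (Real.exp_nonneg _)
  · have hexp : 1 ≤ Real.exp (c * R) * Real.exp (-c * √(Real.log x)) := by
      rw [← Real.exp_add]
      exact Real.one_le_exp (by nlinarith)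
    calc g x ≤ x * 1 := by simpa using htriv x hx
      _ ≤ x * (Real.exp (c * R) * Real.exp (-c * √(Real.log x))) := by gcongr
      _ ≤ x * (C * Real.exp (-c * √(Real.log x)) +
            Real.exp (c * R) * Real.exp (-c * √(Real.log x))) := by
        gcongr
        exact le_add_of_nonneg_left (by positivity)
      _ = _ := by ring

lemma sq_mul_exp_neg_le {κ r : ℝ} (hκ : 0 < κ) (hr : 0 ≤ r) :
    r ^ 2 * Real.exp (-(κ * r)) ≤ 32 / (9 * κ ^ 2) * Real.exp (-(κ / 4) * r) := by
  have hpow := Real.pow_div_factorial_le_exp (3 * κ / 4 * r) (by positivity) 2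
  calc r ^ 2 * Real.exp (-(κ * r))
      = 32 / (9 * κ ^ 2) * ((3 * κ / 4 * r) ^ 2 / Nat.factorial 2) * Real.exp (-(κ * r)) := by
        rw [Nat.factorial_two]
        push_cast
        field_simp
        ring
    _ ≤ 32 / (9 * κ ^ 2) * Real.exp (3 * κ / 4 * r) * Real.exp (-(κ * r)) := by gcongr
    _ = 32 / (9 * κ ^ 2) * Real.exp (-(κ / 4) * r) := by
        rw [mul_assoc, ← Real.exp_add]
        ring_nf

/- The choice `log W = κ √(log x)` balances the three error terms of the contour integral. -/
lemma contour_error_le {κ : ℝ} (hκ : 0 < κ) (hx : 1 < x) :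
    Real.exp (κ * √(Real.log x)) ^ (-(1 / 4) : ℝ) +
        Real.log x / Real.exp (κ * √(Real.log x)) +
        Real.exp (κ * √(Real.log x)) ^ 2 *
          x ^ (-(4 * κ ^ 2 / Real.log (Real.exp (κ * √(Real.log x))))) ≤
      (2 + 32 / (9 * κ ^ 2)) * Real.exp (-(κ / 4) * √(Real.log x)) := by
  have hr : 0 < √(Real.log x) := Real.sqrt_pos.mpr (Real.log_pos hx)
  have hlog : Real.log x = √(Real.log x) ^ 2 := (Real.sq_sqrt (Real.log_pos hx).le).symm
  set r := √(Real.log x)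
  have hfirst : Real.exp (κ * r) ^ (-(1 / 4) : ℝ) = Real.exp (-(κ / 4) * r) := by
    rw [← Real.exp_mul]
    ring_nf
  have hsecond : Real.log x / Real.exp (κ * r) ≤
      32 / (9 * κ ^ 2) * Real.exp (-(κ / 4) * r) := by
    rw [hlog, div_eq_mul_inv, ← Real.exp_neg]
    exact sq_mul_exp_neg_le hκ hr.le
  have hthird : Real.exp (κ * r) ^ 2 * x ^ (-(4 * κ ^ 2 / Real.log (Real.exp (κ * r)))) ≤
      Real.exp (-(κ / 4) * r) := by
    have hexponent : r ^ 2 * -(4 * κ ^ 2 / (κ * r)) = -(4 * κ * r) := by field_simp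
    rw [Real.log_exp, Real.rpow_def_of_pos (by linarith), hlog, hexponent, ← Real.exp_nat_mul,
      ← Real.exp_add, Real.exp_le_exp]
    push_cast
    nlinarith [mul_pos hκ hr]
  linarith

theorem exists_norm_rieszMean_moebius_le : ∃ c : ℝ, 0 < c ∧ ∃ C : ℝ, 0 < C ∧ ∀ x : ℝ, 1 ≤ x →
    ‖rieszMean (fun n => (moebius n : ℂ)) x‖ ≤ C * x * Real.exp (-c * √(Real.log x)) := by
  obtain ⟨a, ha, K, hK, hcontour⟩ := exists_norm_rieszMean_moebius_le_add
  obtain ⟨κ, hκ, rfl⟩ : ∃ κ, 0 < κ ∧ a = 4 * κ ^ 2 :=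
    ⟨√a / 2, by positivity, by rw [div_pow, Real.sq_sqrt ha.le]; ring⟩
  refine ⟨κ / 4, by positivity, K * (2 + 32 / (9 * κ ^ 2)) + Real.exp (κ / 4 * (3 / κ)),
    by positivity, fun x hx => le_mul_exp_neg_sqrt_log_of_le (by positivity) (by positivity)
      (fun y hy => norm_rieszMean_le norm_moebius_le_one (by linarith)) (fun y hy hr => ?_) hx⟩
  have hκr : 3 ≤ κ * √(Real.log y) := (div_le_iff₀' hκ).mp hr
  have hW : 8 ≤ Real.exp (κ * √(Real.log y)) :=
    calc (8 : ℝ) ≤ Real.exp 1 ^ 3 := by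
          have : (2 : ℝ) ^ 3 ≤ Real.exp 1 ^ 3 := by
            gcongr
            linarith [Real.exp_one_gt_d9]
          linarith
      _ = Real.exp 3 := by rw [← Real.exp_nat_mul]; norm_num
      _ ≤ _ := by gcongr
  have hlog : Real.log y = √(Real.log y) ^ 2 := (Real.sq_sqrt (Real.log_nonneg hy)).symm
  have hy1 : 1 < y := (Real.log_pos_iff (by linarith)).mp (by
    rw [hlog]
    exact pow_pos (lt_of_lt_of_le (by positivity) hr) 2)
  calc ‖rieszMean (fun n => (moebius n : ℂ)) y‖ ≤ _ :=
        hcontour y _ (by linarith) hW (by rw [Real.log_exp]; nlinarith)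
    _ ≤ K * y * ((2 + 32 / (9 * κ ^ 2)) * Real.exp (-(κ / 4) * √(Real.log y))) := by
        gcongr
        exact contour_error_le hκ hy1
    _ = _ := by ring

end RieszMean

section Desmoothing

variable {f : ℕ → ℂ} {x h : ℝ}

lemma mul_rieszMean (hx : x ≠ 0) : x * rieszMean f x = ∑ n ∈ Icc 1 ⌊x⌋₊, (x - n : ℂ) * f n := by
  have : (x : ℂ) ≠ 0 := Complex.ofReal_ne_zero.mpr hx
  rw [rieszMean, mul_sum]
  refine sum_congr rfl fun n _ => ?_
  push_cast
  field_simp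

lemma mul_partialSum_eq (hx : 0 < x) (hh : 0 < h) :
    h * partialSum f x = ((x + h : ℝ) : ℂ) * rieszMean f (x + h) - x * rieszMean f x -
      ∑ n ∈ Ioc ⌊x⌋₊ ⌊x + h⌋₊, (x + h - n : ℂ) * f n := by
  have hsplit : ∑ n ∈ Icc 1 ⌊x + h⌋₊, (x + h - n : ℂ) * f n =
      ∑ n ∈ Icc 1 ⌊x⌋₊, (x + h - n : ℂ) * f n +
        ∑ n ∈ Ioc ⌊x⌋₊ ⌊x + h⌋₊, (x + h - n : ℂ) * f n :=
    (sum_Ioc_consecutive _ (Nat.zero_le _) (Nat.floor_le_floor (by linarith))).symm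
  rw [mul_rieszMean hx.ne', mul_rieszMean (by positivity), Complex.ofReal_add, hsplit, partialSum,
    mul_sum, add_sub_right_comm, add_sub_cancel_right, ← sum_sub_distrib]
  exact sum_congr rfl fun n _ => by ring

lemma norm_sum_Ioc_floor_le (hf : ∀ n, ‖f n‖ ≤ 1) (hx : 0 ≤ x) (hh : 0 ≤ h) :
    ‖∑ n ∈ Ioc ⌊x⌋₊ ⌊x + h⌋₊, (x + h - n : ℂ) * f n‖ ≤ h * (h + 1) := by
  have hterm : ∀ n ∈ Ioc ⌊x⌋₊ ⌊x + h⌋₊, ‖(x + h - n : ℂ) * f n‖ ≤ h := fun n hn => by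
    obtain ⟨hxn, hnx⟩ := Finset.mem_Ioc.mp hn
    have hn1 : (n : ℝ) ≤ x + h := (Nat.le_floor_iff (by linarith)).mp hnx
    have hn2 : x < n := (Nat.floor_lt hx).mp hxn
    have hweight : ‖(x + h - n : ℂ)‖ ≤ h := by
      rw [show (x + h - n : ℂ) = ((x + h - n : ℝ) : ℂ) by push_cast; rfl, Complex.norm_real,
        Real.norm_of_nonneg (by linarith)]
      linarith
    rw [norm_mul]
    exact (mul_le_of_le_one_right (norm_nonneg _) (hf n)).trans hweight
  have hcard : ((⌊x + h⌋₊ - ⌊x⌋₊ : ℕ) : ℝ) ≤ h + 1 := by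
    rw [Nat.cast_sub (Nat.floor_le_floor (by linarith))]
    linarith [Nat.floor_le (show 0 ≤ x + h by linarith), Nat.lt_floor_add_one x]
  calc ‖∑ n ∈ Ioc ⌊x⌋₊ ⌊x + h⌋₊, (x + h - n : ℂ) * f n‖
      ≤ ∑ _ ∈ Ioc ⌊x⌋₊ ⌊x + h⌋₊, h := norm_sum_le_of_le _ hterm
    _ = h * ((⌊x + h⌋₊ - ⌊x⌋₊ : ℕ) : ℝ) := by
        rw [sum_const, Nat.card_Ioc, nsmul_eq_mul, mul_comm]
    _ ≤ h * (h + 1) := by gcongr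

lemma mul_norm_partialSum_le (hf : ∀ n, ‖f n‖ ≤ 1) (hx : 0 < x) (hh : 0 < h) :
    h * ‖partialSum f x‖ ≤
      (x + h) * ‖rieszMean f (x + h)‖ + x * ‖rieszMean f x‖ + h * (h + 1) := by
  calc h * ‖partialSum f x‖ = ‖(h : ℂ) * partialSum f x‖ := by
        rw [norm_mul, Complex.norm_real, Real.norm_of_nonneg hh.le]
    _ ≤ ‖((x + h : ℝ) : ℂ) * rieszMean f (x + h)‖ + ‖(x : ℂ) * rieszMean f x‖ + h * (h + 1) := by
        rw [mul_partialSum_eq hx hh]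
        exact (norm_sub_le _ _).trans
          (add_le_add (norm_sub_le _ _) (norm_sum_Ioc_floor_le hf hx.le hh.le))
    _ = _ := by
        rw [norm_mul, norm_mul, Complex.norm_real, Complex.norm_real,
          Real.norm_of_nonneg (by positivity), Real.norm_of_nonneg hx.le]

lemma one_le_exp_mul_mul_exp_neg_sqrt_log (hx : 1 ≤ x) (c : ℝ) :
    1 ≤ Real.exp (c ^ 2 / 4) * (x * Real.exp (-c * √(Real.log x))) := by
  have hsq : √(Real.log x) ^ 2 = Real.log x := Real.sq_sqrt (Real.log_nonneg hx)
  nth_rewrite 1 [← Real.exp_log (show 0 < x by linarith)]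
  rw [← Real.exp_add, ← Real.exp_add]
  exact Real.one_le_exp (by nlinarith [sq_nonneg (√(Real.log x) - c / 2)])

theorem norm_partialSum_le_of_norm_rieszMean_le {c C : ℝ} (hf : ∀ n, ‖f n‖ ≤ 1) (hc : 0 ≤ c)
    (hR : ∀ x, 1 ≤ x → ‖rieszMean f x‖ ≤ C * x * Real.exp (-(2 * c) * √(Real.log x)))
    (hx : 1 ≤ x) :
    ‖partialSum f x‖ ≤
      (5 * C + 1 + Real.exp (c ^ 2 / 4)) * x * Real.exp (-c * √(Real.log x)) := by
  have hx0 : 0 < x := by linarith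
  set E := Real.exp (-c * √(Real.log x)) with hE
  have : 0 < E := Real.exp_pos _
  have hE1 : E ≤ 1 := Real.exp_le_one_iff.mpr (by nlinarith [Real.sqrt_nonneg (Real.log x)])
  have hEE : Real.exp (-(2 * c) * √(Real.log x)) = E ^ 2 := by
    rw [hE, ← Real.exp_nat_mul]
    push_cast
    ring_nf
  have hC : 0 ≤ C := by simpa using (norm_nonneg _).trans (hR 1 le_rfl)
  have hh0 : 0 < x * E := by positivity
  have hhx : x * E ≤ x := mul_le_of_le_one_right hx0.le hE1
  have hRx : ‖rieszMean f x‖ ≤ C * x * E ^ 2 := hEE ▸ hR x hx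
  have hRxh : ‖rieszMean f (x + x * E)‖ ≤ C * (2 * x) * E ^ 2 := by
    refine (hR _ (by linarith)).trans ?_
    rw [← hEE, neg_mul, neg_mul]
    gcongr <;> linarith
  have hsmooth : x * E * ‖partialSum f x‖ ≤ x * E * (5 * C * (x * E) + (x * E + 1)) :=
    calc x * E * ‖partialSum f x‖
        ≤ (x + x * E) * ‖rieszMean f (x + x * E)‖ + x * ‖rieszMean f x‖ +
            x * E * (x * E + 1) := mul_norm_partialSum_le hf hx0 hh0
      _ ≤ 2 * x * (C * (2 * x) * E ^ 2) + x * (C * x * E ^ 2) + x * E * (x * E + 1) := by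
          gcongr
          linarith
      _ = _ := by ring
  calc ‖partialSum f x‖ ≤ 5 * C * (x * E) + (x * E + 1) := le_of_mul_le_mul_left hsmooth hh0
    _ ≤ 5 * C * (x * E) + (x * E + Real.exp (c ^ 2 / 4) * (x * E)) := by
        gcongr
        exact one_le_exp_mul_mul_exp_neg_sqrt_log hx c
    _ = _ := by ring

theorem exists_norm_partialSum_moebius_le : ∃ c : ℝ, 0 < c ∧ ∃ C : ℝ, 0 < C ∧ ∀ x : ℝ, 1 ≤ x →
    ‖partialSum (fun n => (moebius n : ℂ)) x‖ ≤ C * x * Real.exp (-c * √(Real.log x)) := by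
  obtain ⟨c, hc, C, hC, hR⟩ := exists_norm_rieszMean_moebius_le
  refine ⟨c / 2, by positivity, 5 * C + 1 + Real.exp ((c / 2) ^ 2 / 4), by positivity,
    fun x => norm_partialSum_le_of_norm_rieszMean_le norm_moebius_le_one (by positivity) ?_⟩
  rwa [mul_div_cancel₀ c two_ne_zero]

end Desmoothing

section CoprimePartialSum

variable {p : ℕ}

lemma moebius_prime_mul (hp : p.Prime) (m : ℕ) :
    moebius (p * m) = if p ∣ m then 0 else -moebius m := by
  split_ifs with hpm
  · refine moebius_eq_zero_of_not_squarefree fun hsq => hp.one_lt.ne' ?_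
    exact Nat.isUnit_iff.mp (hsq p (mul_dvd_mul_left p hpm))
  · rw [isMultiplicative_moebius.map_mul_of_coprime (hp.coprime_iff_not_dvd.mpr hpm),
      moebius_apply_prime hp, neg_one_mul]

lemma sum_filter_dvd_Icc_one {M : Type*} [AddCommMonoid M] (hp : 0 < p) (N : ℕ) (f : ℕ → M) :
    ∑ n ∈ Icc 1 N with p ∣ n, f n = ∑ m ∈ Icc 1 (N / p), f (p * m) := by
  refine (sum_nbij (p * ·) (fun m hm => ?_) (fun a _ b _ hab => Nat.eq_of_mul_eq_mul_left hp hab)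
    (fun n hn => ?_) fun _ _ => rfl).symm
  · obtain ⟨hm1, hmN⟩ := Finset.mem_Icc.mp hm
    rw [Nat.le_div_iff_mul_le hp, mul_comm] at hmN
    exact mem_filter.mpr ⟨Finset.mem_Icc.mpr ⟨Nat.mul_pos hp hm1, hmN⟩, dvd_mul_right p m⟩
  · obtain ⟨hnN, m, rfl⟩ := mem_filter.mp (mem_coe.mp hn)
    obtain ⟨hm1, hmN⟩ := Finset.mem_Icc.mp hnN
    exact ⟨m, mem_coe.mpr (Finset.mem_Icc.mpr ⟨Nat.pos_of_mul_pos_left hm1,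
      (Nat.le_div_iff_mul_le hp).mpr (by rwa [mul_comm])⟩), rfl⟩

/-- The sum `∑_{n ≤ x, p ∤ n} μ(n)`. -/
noncomputable def coprimePartialSum (p : ℕ) (x : ℝ) : ℂ :=
  ∑ n ∈ Icc 1 ⌊x⌋₊ with ¬p ∣ n, (moebius n : ℂ)

lemma coprimePartialSum_eq_partialSum_add (hp : p.Prime) (x : ℝ) :
    coprimePartialSum p x =
      partialSum (fun n => (moebius n : ℂ)) x + coprimePartialSum p (x / p) := by
  have hdvd : ∑ n ∈ Icc 1 ⌊x⌋₊ with p ∣ n, (moebius n : ℂ) = -coprimePartialSum p (x / p) := by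
    rw [sum_filter_dvd_Icc_one hp.pos, coprimePartialSum, Nat.floor_div_natCast, sum_filter,
      ← sum_neg_distrib]
    refine sum_congr rfl fun m _ => ?_
    rw [moebius_prime_mul hp]
    split_ifs <;> simp
  rw [partialSum, ← sum_filter_add_sum_filter_not _ (p ∣ ·), hdvd, coprimePartialSum]
  ring

lemma coprimePartialSum_of_lt_one {x : ℝ} (hx : x < 1) : coprimePartialSum p x = 0 := by
  simp [coprimePartialSum, Nat.floor_eq_zero.mpr hx]

variable {b c x : ℝ}

lemma sqrt_add_le_sqrt_add_sqrt {u v : ℝ} (hu : 0 ≤ u) (hv : 0 ≤ v) : √(u + v) ≤ √u + √v := by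
  rw [Real.sqrt_le_left (by positivity)]
  nlinarith [Real.sq_sqrt hu, Real.sq_sqrt hv, Real.sqrt_nonneg u, Real.sqrt_nonneg v]

lemma exp_neg_sqrt_log_div_le (hc : 0 ≤ c) (hc2 : c ≤ 1 / 2) (hb : 2 ≤ b) (hx : b ≤ x) :
    Real.exp (-c * √(Real.log (x / b))) / b ≤ 4 / 5 * Real.exp (-c * √(Real.log x)) := by
  have hb0 : 0 < b := by linarith
  have hx0 : 0 < x := by linarith
  set u := Real.log b
  have hu : 0.6931471803 ≤ u := Real.log_two_gt_d9.le.trans (Real.log_le_log two_pos hb)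
  have hlog : 0 ≤ Real.log (x / b) := Real.log_nonneg ((one_le_div hb0).mpr hx)
  have hsum : Real.log x = Real.log (x / b) + u := by
    rw [Real.log_div hx0.ne' hb0.ne', sub_add_cancel]
  have hsqrt : √(Real.log x) ≤ √(Real.log (x / b)) + √u :=
    hsum ▸ sqrt_add_le_sqrt_add_sqrt hlog (by linarith)
  have hamgm : √u ≤ (1 + u) / 2 := by
    nlinarith [Real.sq_sqrt (show 0 ≤ u by linarith), sq_nonneg (√u - 1)]
  have hshift : c * √(Real.log x) ≤ c * √(Real.log (x / b)) + 1 / 2 * ((1 + u) / 2) :=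
    calc c * √(Real.log x) ≤ c * (√(Real.log (x / b)) + √u) := by gcongr
      _ = c * √(Real.log (x / b)) + c * √u := mul_add _ _ _
      _ ≤ _ := by gcongr
  have hquarter : Real.exp (-(1 / 4)) ≤ 4 / 5 := by
    rw [Real.exp_neg, inv_le_comm₀ (Real.exp_pos _) (by norm_num)]
    linarith [Real.add_one_le_exp (1 / 4 : ℝ)]
  calc Real.exp (-c * √(Real.log (x / b))) / b = Real.exp (-c * √(Real.log (x / b)) - u) := by
        rw [Real.exp_sub, Real.exp_log hb0]
    _ ≤ Real.exp (-(1 / 4) + -c * √(Real.log x)) := by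
        gcongr
        linarith
    _ = Real.exp (-(1 / 4)) * Real.exp (-c * √(Real.log x)) := Real.exp_add _ _
    _ ≤ _ := by gcongr

lemma norm_le_of_eq_add_comp_div {E : Type*} [SeminormedAddCommGroup E] {F G : ℝ → E} {C : ℝ}
    (hc : 0 ≤ c) (hc2 : c ≤ 1 / 2) (hb : 2 ≤ b) (hsmall : ∀ x < 1, F x = 0)
    (hrec : ∀ x, 1 ≤ x → F x = G x + F (x / b))
    (hG : ∀ x, 1 ≤ x → ‖G x‖ ≤ C * x * Real.exp (-c * √(Real.log x))) (hx : 1 ≤ x) :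
    ‖F x‖ ≤ 5 * C * x * Real.exp (-c * √(Real.log x)) := by
  have hC : 0 ≤ C := by simpa using (norm_nonneg _).trans (hG 1 le_rfl)
  have hb0 : 0 < b := by linarith
  obtain ⟨N, hN⟩ := pow_unbounded_of_one_lt x (show 1 < b by linarith)
  induction N generalizing x with
  | zero => linarith [pow_zero b]
  | succ N ih =>
    have : 0 < x := by linarith
    have htail : ‖F (x / b)‖ ≤ 4 * C * x * Real.exp (-c * √(Real.log x)) := by
      rcases lt_or_ge (x / b) 1 with hlt | hge
      · rw [hsmall _ hlt, norm_zero]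
        positivity
      · calc ‖F (x / b)‖ ≤ 5 * C * (x / b) * Real.exp (-c * √(Real.log (x / b))) :=
              ih hge ((div_lt_iff₀ hb0).mpr (by rwa [← pow_succ]))
          _ = 5 * C * x * (Real.exp (-c * √(Real.log (x / b))) / b) := by ring
          _ ≤ 5 * C * x * (4 / 5 * Real.exp (-c * √(Real.log x))) := by
              gcongr
              exact exp_neg_sqrt_log_div_le hc hc2 hb ((one_le_div hb0).mp hge)
          _ = _ := by ring
    rw [hrec x hx]
    linarith [norm_add_le (G x) (F (x / b)), hG x hx]

lemma ofReal_sum_filter_not_dvd_moebius (p : ℕ) (x : ℝ) :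
    ((∑ n ∈ (Finset.Icc 1 ⌊x⌋₊).filter (fun n => ¬ p ∣ n), (moebius n : ℝ) : ℝ) : ℂ) =
      coprimePartialSum p x := by
  simp [coprimePartialSum]

end CoprimePartialSum

/-- There are positive constants `c`, `C` such that for every prime `p` and every `x ≥ 2`,
`|Σ_{n ≤ x, p ∤ n} μ(n)| ≤ C x exp(−c √(log x))`. -/
theorem moebius_sum_coprime_bound :
    ∃ c > (0 : ℝ), ∃ C > (0 : ℝ), ∀ p : ℕ, p.Prime → ∀ x : ℝ, 2 ≤ x →
      |∑ n ∈ (Finset.Icc 1 ⌊x⌋₊).filter (fun n => ¬ p ∣ n), (moebius n : ℝ)|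
        ≤ C * x * Real.exp (-c * Real.sqrt (Real.log x)) := by
  obtain ⟨c, hc, C, hC, hM⟩ := exists_norm_partialSum_moebius_le
  refine ⟨min c (1 / 2), by positivity, 5 * C, by positivity, fun p hp x hx => ?_⟩
  rw [← Real.norm_eq_abs, ← Complex.norm_real, ofReal_sum_filter_not_dvd_moebius]
  refine norm_le_of_eq_add_comp_div (F := coprimePartialSum p) (b := p) (by positivity)
    (min_le_right _ _) (by exact_mod_cast hp.two_le) (fun _ => coprimePartialSum_of_lt_one)
    (fun y _ => coprimePartialSum_eq_partialSum_add hp y) (fun y hy => (hM y hy).trans ?_)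
    (by linarith)
  rw [neg_mul, neg_mul]
  gcongr
  exact min_le_left _ _
end
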